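/- arXiv:1602.08937 — 6 statements merged into one kernel-verified Lean document; each statement's English description precedes it below -/
import Mathlib

section
/- For any complex number q with 0 < |q| < 1, every multiple zero ζ of the partial theta function θ(q,·) (i.e. every ζ ∈ ℂ with θ(q,ζ) = 0 and ∂θ/∂x(q,ζ) = 0) satisfies |ζ| ≤ 8^11 = 8589934592. -/
/-!
Let `J(x) = ∑_{n ∈ ℤ} q^{n(n+1)/2} x^n = θ(x) + x⁻¹ θ(x⁻¹)`. At a large multiple zero `ζ` of `θ`,
the value and the derivative of `J` are those of `x⁻¹ θ(x⁻¹)`, so that `|J(ζ)| ≤ 2/|ζ|` while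
`|x J'(x)/J(x)| ≤ 2` at `x = ζ`. On the other hand `J` is quasi-periodic under `x ↦ q x`, which
moves `ζ` to a point `y = q^k ζ` of the annulus `|q|^{1/2} ≤ |y| ≤ |q|^{-1/2}`. There the Jacobi
triple product writes `J(y)` as `1 + y⁻¹` times factors bounded below in terms of `|q|`, so the only
zero of `J` in the annulus is `-1`. The logarithmic derivative, which changes by `k` under the
shift, controls the distance of `y` from `-1`, and the product then bounds `|J(ζ)|` from below by
more than `2/|ζ|`.
-/

open Filter Finset Topology

namespace PartialTheta

section FiniteProducts

/-- The finite `q`-Pochhammer symbol `(a; q)_n = ∏_{m < n} (1 - a q^m)`. The base `q` comes first,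
so that `qPochhammer q` is a function of the argument `a`. -/
def qPochhammer {R : Type*} [CommRing R] (q a : R) (n : ℕ) : R :=
  ∏ m ∈ range n, (1 - a * q ^ m)

/-- The coefficient `1 / (q; q)_k` of Euler's `q`-exponential, extended to integer indices by the
value `0` for `k < 0`; with this convention `qExpCoeff_sub_one` holds for all `k`. -/
def qExpCoeff {K : Type*} [Field K] (q : K) (k : ℤ) : K :=
  if 0 ≤ k then (qPochhammer q q k.toNat)⁻¹ else 0

theorem qPochhammer_zero {R : Type*} [CommRing R] (q a : R) : qPochhammer q a 0 = 1 :=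
  prod_range_zero _

theorem qPochhammer_succ {R : Type*} [CommRing R] (q a : R) (n : ℕ) :
    qPochhammer q a (n + 1) = qPochhammer q a n * (1 - a * q ^ n) :=
  prod_range_succ _ _

variable {K : Type*} [Field K] {q x : K}

theorem qExpCoeff_of_nonneg {k : ℤ} (hk : 0 ≤ k) : qExpCoeff q k = (qPochhammer q q k.toNat)⁻¹ :=
  if_pos hk

theorem qExpCoeff_of_neg {k : ℤ} (hk : k < 0) : qExpCoeff q k = 0 :=
  if_neg hk.not_ge

theorem qExpCoeff_sub_one (hq : ∀ n : ℕ, q ^ (n + 1) ≠ 1) (k : ℤ) :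
    qExpCoeff q (k - 1) = (1 - q ^ k) * qExpCoeff q k := by
  obtain hk | rfl | hk := lt_trichotomy k 0
  · rw [qExpCoeff_of_neg hk, qExpCoeff_of_neg (by lia), mul_zero]
  · rw [qExpCoeff_of_neg (by lia), zpow_zero, sub_self, zero_mul]
  · obtain ⟨n, rfl⟩ : ∃ n : ℕ, k = n + 1 := ⟨(k - 1).toNat, by lia⟩
    have hn : 1 - q ^ (n + 1) ≠ 0 := sub_ne_zero.2 (hq n).symm
    rw [qExpCoeff_of_nonneg (by lia), qExpCoeff_of_nonneg hk.le,
      show ((n : ℤ) + 1 - 1).toNat = n by lia, show ((n : ℤ) + 1).toNat = n + 1 by lia,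
      qPochhammer_succ, ← pow_succ', mul_inv_rev, ← Nat.cast_succ, zpow_natCast,
      mul_inv_cancel_left₀ hn]

theorem triangle_add (m n : ℤ) :
    (m + n) * (m + n + 1) / 2 = m * (m + 1) / 2 + n * (n + 1) / 2 + m * n := by
  have hm := Int.ediv_mul_cancel (Int.even_mul_succ_self m).two_dvd
  have hn := Int.ediv_mul_cancel (Int.even_mul_succ_self n).two_dvd
  exact Int.ediv_eq_of_eq_mul_left two_ne_zero (by linear_combination -hm - hn)

/-- The term `q^{n(n+1)/2} x^n` of the theta series. The integer division is exact, since `n(n+1)`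
is even. -/
def thetaTerm (q x : K) (n : ℤ) : K :=
  q ^ (n * (n + 1) / 2) * x ^ n

theorem thetaTerm_add (hq : q ≠ 0) (hx : x ≠ 0) (m n : ℤ) :
    thetaTerm q x (m + n) = thetaTerm q x m * thetaTerm q x n * q ^ (m * n) := by
  simp only [thetaTerm, triangle_add, zpow_add₀ hq, zpow_add₀ hx]
  ring

theorem thetaTerm_zero : thetaTerm q x 0 = 1 := by simp [thetaTerm]

theorem thetaTerm_one : thetaTerm q x 1 = q * x := by simp [thetaTerm]

theorem thetaTerm_neg_one : thetaTerm q x (-1) = x⁻¹ := by simp [thetaTerm]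

/-- The coefficient of `q^{j(j+1)/2} x^j` in the finite Jacobi triple product, that is, the
Gaussian binomial coefficient `[2n choose n+j]_q`. -/
def centralQBinom (q : K) (n : ℕ) (j : ℤ) : K :=
  qPochhammer q q (2 * n) * (qExpCoeff q (n + j) * qExpCoeff q (n - j))

theorem centralQBinom_zero (j : ℤ) : centralQBinom q 0 j = if j = 0 then 1 else 0 := by
  split_ifs with hj
  · simp [centralQBinom, hj, qExpCoeff_of_nonneg, qPochhammer_zero]
  · obtain h | h := lt_or_gt_of_ne hj
    · simp [centralQBinom, qExpCoeff_of_neg h]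
    · simp [centralQBinom, qExpCoeff_of_neg (neg_lt_zero.2 h)]

theorem centralQBinom_succ (hq0 : q ≠ 0) (hq : ∀ n : ℕ, q ^ (n + 1) ≠ 1) (n : ℕ) (j : ℤ) :
    centralQBinom q (n + 1) j = (1 + q ^ (2 * n + 1)) * centralQBinom q n j +
      q ^ (n + 1 - j) * centralQBinom q n (j - 1) +
      q ^ (n + 1 + j) * centralQBinom q n (j + 1) := by
  have hpoch : qPochhammer q q (2 * (n + 1)) =
      qPochhammer q q (2 * n) * (1 - q ^ (2 * n + 1)) * (1 - q ^ (2 * n + 2)) := by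
    rw [mul_add_one, qPochhammer_succ, qPochhammer_succ]
    ring
  have hr (k : ℤ) : qExpCoeff q (k - 1) = (1 - q ^ k) * qExpCoeff q k := qExpCoeff_sub_one hq k
  have hr' (k : ℤ) : qExpCoeff q (k - 2) = (1 - q⁻¹ * q ^ k) * (1 - q ^ k) * qExpCoeff q k := by
    rw [show k - 2 = k - 1 - 1 by ring, hr, hr, zpow_sub_one₀ hq0]
    ring
  simp only [centralQBinom, hpoch, Nat.cast_succ]
  rw [show (n : ℤ) + j = n + 1 + j - 1 by ring, show (n : ℤ) - j = n + 1 - j - 1 by ring,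
    show (n : ℤ) + (j - 1) = n + 1 + j - 2 by ring, show (n : ℤ) - (j - 1) = n + 1 - j by ring,
    show (n : ℤ) + (j + 1) = n + 1 + j by ring, show (n : ℤ) - (j + 1) = n + 1 - j - 2 by ring]
  simp only [hr, hr']
  have hprod : q ^ (2 * n + 2) = q ^ ((n : ℤ) + 1 + j) * q ^ ((n : ℤ) + 1 - j) := by
    rw [← zpow_add₀ hq0, ← zpow_natCast]
    congr 1
    push_cast
    ring
  have hprod' : q ^ (2 * n + 1) = q⁻¹ * (q ^ ((n : ℤ) + 1 + j) * q ^ ((n : ℤ) + 1 - j)) := by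
    rw [← hprod, pow_succ _ (2 * n + 1)]
    field_simp
  rw [hprod, hprod']
  ring

theorem qPochhammer_succ_mul_qPochhammer_succ (hx : x ≠ 0) (n : ℕ) :
    qPochhammer q (-(q * x)) (n + 1) * qPochhammer q (-x⁻¹) (n + 1) =
      (1 + q ^ (2 * n + 1) + q ^ (n + 1) * x + q ^ n * x⁻¹) *
        (qPochhammer q (-(q * x)) n * qPochhammer q (-x⁻¹) n) := by
  simp only [qPochhammer_succ]
  field_simp
  ring

theorem hasSum_comp_add_right {G M : Type*} [AddGroup G] [AddCommMonoid M] [TopologicalSpace M]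
    {f : G → M} {a : M} (hf : HasSum f a) (c : G) : HasSum (fun j => f (j + c)) a :=
  (Equiv.addRight c).hasSum_iff.2 hf

/-- A finite form of the Jacobi triple product, equivalent to the `q`-binomial theorem. -/
theorem hasSum_centralQBinom_mul_thetaTerm [TopologicalSpace K] [IsTopologicalSemiring K]
    (hq0 : q ≠ 0) (hq : ∀ n : ℕ, q ^ (n + 1) ≠ 1) (hx : x ≠ 0) (n : ℕ) :
    HasSum (fun j : ℤ => centralQBinom q n j * thetaTerm q x j)
      (qPochhammer q (-(q * x)) n * qPochhammer q (-x⁻¹) n) := by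
  induction n with
  | zero =>
    convert hasSum_ite_eq (0 : ℤ) (1 : K) using 1
    · ext j
      split_ifs with hj <;> simp [centralQBinom_zero, hj, thetaTerm_zero]
    · simp [qPochhammer_zero]
  | succ n ih =>
    have hup := hasSum_comp_add_right (ih.mul_left (q ^ (n + 1) * x)) (-1 : ℤ)
    have hdown := hasSum_comp_add_right (ih.mul_left (q ^ n * x⁻¹)) (1 : ℤ)
    rw [qPochhammer_succ_mul_qPochhammer_succ hx, add_mul, add_mul]
    refine (((ih.mul_left _).add hup).add hdown).congr_fun fun j => ?_
    rw [centralQBinom_succ hq0 hq, sub_eq_add_neg j 1, thetaTerm_add hq0 hx j (-1),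
      thetaTerm_add hq0 hx j 1, thetaTerm_neg_one, thetaTerm_one, mul_neg_one, mul_one,
      zpow_sub₀ hq0, zpow_add₀ hq0 (n + 1 : ℤ) j, zpow_neg, zpow_add_one₀ hq0, zpow_natCast]
    field_simp
    ring

end FiniteProducts

section InfiniteProducts

variable {𝕜 : Type*} [NormedField 𝕜] {q x : 𝕜}

/-- The infinite `q`-Pochhammer symbol `(a; q)_∞ = ∏_m (1 - a q^m)`, the building block of the
triple product. It is meaningful for `‖q‖ < 1`. -/
noncomputable def qPochhammerInf (q a : 𝕜) : 𝕜 :=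
  ∏' m : ℕ, (1 - a * q ^ m)

/-- The partial theta function `θ(q, x)`, meaningful for `‖q‖ < 1`. -/
noncomputable def partialTheta (q x : 𝕜) : 𝕜 :=
  ∑' j : ℕ, q ^ (j * (j + 1) / 2) * x ^ j

/-- The two-sided (Jacobi) theta series `∑_{n ∈ ℤ} q^{n(n+1)/2} x^n`, meaningful for `‖q‖ < 1` and
`x ≠ 0`; it completes `partialTheta` to a quasi-periodic function. -/
noncomputable def bilateralTheta (q x : 𝕜) : 𝕜 :=
  ∑' n : ℤ, thetaTerm q x n

theorem summable_norm_partialTheta (hq : ‖q‖ < 1) (x : 𝕜) :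
    Summable fun j : ℕ => ‖q ^ (j * (j + 1) / 2) * x ^ j‖ := by
  refine summable_of_ratio_norm_eventually_le (r := 1 / 2) (by norm_num) ?_
  have hlim : Tendsto (fun j : ℕ => q ^ (j + 1) * x) atTop (𝓝 (0 * x)) :=
    ((tendsto_pow_atTop_nhds_zero_of_norm_lt_one hq).comp (tendsto_add_atTop_nat 1)).mul_const x
  rw [zero_mul] at hlim
  filter_upwards [hlim.norm.eventually_le_const (by norm_num : ‖(0 : 𝕜)‖ < 1 / 2)] with j hj
  have hexp : (j + 1) * (j + 1 + 1) / 2 = j * (j + 1) / 2 + (j + 1) := by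
    rw [show (j + 1) * (j + 1 + 1) = j * (j + 1) + (j + 1) * 2 by ring,
      Nat.add_mul_div_right _ _ two_pos]
  have hstep : q ^ ((j + 1) * (j + 1 + 1) / 2) * x ^ (j + 1) =
      q ^ (j + 1) * x * (q ^ (j * (j + 1) / 2) * x ^ j) := by
    rw [hexp, pow_add, pow_succ x]
    ring
  rw [norm_norm, norm_norm, hstep, norm_mul]
  gcongr

theorem thetaTerm_natCast (j : ℕ) : thetaTerm q x j = q ^ (j * (j + 1) / 2) * x ^ j := by
  rw [thetaTerm]
  norm_cast

theorem thetaTerm_neg_natCast_add_one (j : ℕ) :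
    thetaTerm q x (-(j + 1)) = x⁻¹ * (q ^ (j * (j + 1) / 2) * x⁻¹ ^ j) := by
  rw [thetaTerm, show -((j : ℤ) + 1) * (-((j : ℤ) + 1) + 1) = j * (j + 1) by ring, zpow_neg,
    ← inv_zpow]
  norm_cast
  rw [pow_succ]
  ring

theorem summable_norm_thetaTerm (hq : ‖q‖ < 1) (x : 𝕜) : Summable fun n => ‖thetaTerm q x n‖ := by
  refine Summable.of_nat_of_neg_add_one ?_ ?_
  · simpa only [thetaTerm_natCast] using summable_norm_partialTheta hq x
  · simpa only [thetaTerm_neg_natCast_add_one, norm_mul ‖x⁻¹‖] using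
      ((summable_norm_partialTheta hq x⁻¹).mul_left ‖x⁻¹‖).congr fun j => (norm_mul _ _).symm

theorem pow_succ_ne_one_of_norm_lt_one (hq : ‖q‖ < 1) (n : ℕ) : q ^ (n + 1) ≠ 1 := fun h => by
  have := pow_lt_one₀ (norm_nonneg q) hq n.succ_ne_zero
  rw [← norm_pow, h, norm_one] at this
  exact this.false

theorem summable_norm_mul_pow (hq : ‖q‖ < 1) (a : 𝕜) : Summable fun m : ℕ => ‖a * q ^ m‖ := by
  simpa only [norm_mul, norm_pow] using
    (summable_geometric_of_lt_one (norm_nonneg q) hq).mul_left ‖a‖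

theorem one_sub_norm_mul_pow_le (q a : 𝕜) (m : ℕ) : 1 - ‖a‖ * ‖q‖ ^ m ≤ ‖1 - a * q ^ m‖ := by
  simpa only [norm_one, norm_mul, norm_pow] using norm_sub_norm_le 1 (a * q ^ m)

theorem one_sub_norm_le_norm_one_sub_mul_pow (hq : ‖q‖ ≤ 1) (a : 𝕜) (m : ℕ) :
    1 - ‖a‖ ≤ ‖1 - a * q ^ m‖ := by
  refine le_trans ?_ (one_sub_norm_mul_pow_le q a m)
  gcongr
  exact mul_le_of_le_one_right (norm_nonneg a) (pow_le_one₀ (norm_nonneg q) hq)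

variable [CompleteSpace 𝕜]

theorem bilateralTheta_eq_partialTheta_add (hq : ‖q‖ < 1) (x : 𝕜) :
    bilateralTheta q x = partialTheta q x + x⁻¹ * partialTheta q x⁻¹ := by
  refine HasSum.tsum_eq (HasSum.of_nat_of_neg_add_one ?_ ?_)
  · simp only [thetaTerm_natCast]
    exact (summable_norm_partialTheta hq x).of_norm.hasSum
  · simp only [thetaTerm_neg_natCast_add_one]
    exact (summable_norm_partialTheta hq x⁻¹).of_norm.hasSum.mul_left x⁻¹

theorem bilateralTheta_eq_mul_bilateralTheta_zpow_mul (hq0 : q ≠ 0) (hq : ‖q‖ < 1) (hx : x ≠ 0)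
    (k : ℤ) : bilateralTheta q x = thetaTerm q x k * bilateralTheta q (q ^ k * x) := by
  have hterm (n : ℤ) : thetaTerm q x (n + k) = thetaTerm q x k * thetaTerm q (q ^ k * x) n := by
    rw [thetaTerm_add hq0 hx, thetaTerm, thetaTerm, thetaTerm, mul_zpow, ← zpow_mul, mul_comm n k]
    ring
  have hsum := hasSum_comp_add_right (summable_norm_thetaTerm hq x).of_norm.hasSum k
  simp only [hterm] at hsum
  exact hsum.unique ((summable_norm_thetaTerm hq (q ^ k * x)).of_norm.hasSum.mul_left _)

theorem multipliable_qPochhammerInf (hq : ‖q‖ < 1) (a : 𝕜) :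
    Multipliable fun m : ℕ => 1 - a * q ^ m := by
  simpa only [sub_eq_add_neg] using multipliable_one_add_of_summable (f := fun m => -(a * q ^ m))
    (by simpa only [norm_neg] using summable_norm_mul_pow hq a)

theorem tendsto_qPochhammer (hq : ‖q‖ < 1) (a : 𝕜) :
    Tendsto (qPochhammer q a) atTop (𝓝 (qPochhammerInf q a)) :=
  (multipliable_qPochhammerInf hq a).hasProd.tendsto_prod_nat

theorem qPochhammerInf_eq_one_sub_mul (hq : ‖q‖ < 1) (a : 𝕜) :
    qPochhammerInf q a = (1 - a) * qPochhammerInf q (a * q) := by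
  refine tendsto_nhds_unique ((tendsto_qPochhammer hq a).comp (tendsto_add_atTop_nat 1))
    (((tendsto_qPochhammer hq (a * q)).const_mul (1 - a)).congr fun n => ?_)
  simp only [Function.comp_apply, qPochhammer, prod_range_succ', pow_zero, mul_one, pow_succ']
  rw [mul_comm]
  simp only [mul_assoc]

theorem qPochhammerInf_ne_zero (hq : ‖q‖ < 1) {a : 𝕜} (ha : ‖a‖ < 1) : qPochhammerInf q a ≠ 0 := by
  have hne (m : ℕ) : 1 + -(a * q ^ m) ≠ 0 := by
    rw [← sub_eq_add_neg, ← norm_pos_iff]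
    exact (sub_pos.2 ha).trans_le (one_sub_norm_le_norm_one_sub_mul_pow hq.le a m)
  simpa only [qPochhammerInf, sub_eq_add_neg] using tprod_one_add_ne_zero_of_summable hne
    (by simpa only [norm_neg] using summable_norm_mul_pow hq a)

theorem qPochhammerInf_norm_le_norm (hq : ‖q‖ < 1) {a : 𝕜} {r : ℝ} (ha : ‖a‖ ≤ r) (hr : r ≤ 1) :
    qPochhammerInf ‖q‖ r ≤ ‖qPochhammerInf q a‖ := by
  refine le_of_tendsto_of_tendsto' (tendsto_qPochhammer (by rwa [norm_norm]) r)
    (tendsto_qPochhammer hq a).norm fun n => ?_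
  simp only [qPochhammer, norm_prod]
  refine prod_le_prod (fun m _ => ?_) fun m _ => ?_
  · exact sub_nonneg.2 (mul_le_one₀ hr (by positivity) (pow_le_one₀ (norm_nonneg q) hq.le))
  · refine le_trans ?_ (one_sub_norm_mul_pow_le q a m)
    gcongr

theorem tendsto_qExpCoeff (hq : ‖q‖ < 1) :
    Tendsto (qExpCoeff q) atTop (𝓝 (qPochhammerInf q q)⁻¹) := by
  have htoNat : Tendsto Int.toNat atTop atTop :=
    tendsto_atTop.2 fun n => (eventually_ge_atTop (n : ℤ)).mono fun k hk => by lia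
  refine (((tendsto_qPochhammer hq q).comp htoNat).inv₀ (qPochhammerInf_ne_zero hq hq)).congr' ?_
  filter_upwards [eventually_ge_atTop 0] with k hk using (qExpCoeff_of_nonneg hk).symm

theorem exists_norm_qExpCoeff_le (hq : ‖q‖ < 1) : ∃ C, ∀ k, ‖qExpCoeff q k‖ ≤ C := by
  obtain ⟨C, hC⟩ := ((tendsto_qPochhammer hq q).inv₀
    (qPochhammerInf_ne_zero hq hq)).norm.bddAbove_range
  rw [mem_upperBounds, Set.forall_mem_range] at hC
  refine ⟨C, fun k => ?_⟩
  obtain hk | hk := le_or_gt 0 k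
  · rw [qExpCoeff_of_nonneg hk]
    exact hC k.toNat
  · rw [qExpCoeff_of_neg hk, norm_zero]
    exact (norm_nonneg _).trans (hC 0)

theorem tendsto_centralQBinom (hq : ‖q‖ < 1) (j : ℤ) :
    Tendsto (fun n => centralQBinom q n j) atTop (𝓝 (qPochhammerInf q q)⁻¹) := by
  have hpoch := (tendsto_qPochhammer hq q).comp
    (tendsto_id.const_mul_atTop' (two_pos : (0 : ℕ) < 2))
  have hcoeff (i : ℤ) : Tendsto (fun n : ℕ => qExpCoeff q (n + i)) atTop _ :=
    (tendsto_qExpCoeff hq).comp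
      (tendsto_atTop_add_const_right _ i tendsto_natCast_atTop_atTop)
  have hlim := hpoch.mul ((hcoeff j).mul (hcoeff (-j)))
  rwa [mul_inv_cancel_left₀ (qPochhammerInf_ne_zero hq hq)] at hlim

theorem exists_norm_centralQBinom_le (hq : ‖q‖ < 1) : ∃ C, ∀ n j, ‖centralQBinom q n j‖ ≤ C := by
  obtain ⟨C, hC⟩ := (tendsto_qPochhammer hq q).norm.bddAbove_range
  obtain ⟨D, hD⟩ := exists_norm_qExpCoeff_le hq
  rw [mem_upperBounds, Set.forall_mem_range] at hC
  have hC0 : 0 ≤ C := (norm_nonneg _).trans (hC 0)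
  have hD0 : 0 ≤ D := (norm_nonneg _).trans (hD 0)
  refine ⟨C * (D * D), fun n j => ?_⟩
  rw [centralQBinom, norm_mul, norm_mul]
  gcongr
  exacts [hC _, hD _, hD _]

/-- Jacobi triple product, obtained from its finite form by dominated convergence. -/
theorem bilateralTheta_eq_qPochhammerInf (hq0 : q ≠ 0) (hq : ‖q‖ < 1) (hx : x ≠ 0) :
    bilateralTheta q x =
      qPochhammerInf q q * (qPochhammerInf q (-(q * x)) * qPochhammerInf q (-x⁻¹)) := by
  obtain ⟨C, hC⟩ := exists_norm_centralQBinom_le hq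
  have hdom := tendsto_tsum_of_dominated_convergence (𝓕 := atTop)
    ((summable_norm_thetaTerm hq x).mul_left C)
    (fun j => (tendsto_centralQBinom hq j).mul_const (thetaTerm q x j))
    (.of_forall fun n j => (norm_mul_le _ _).trans
      (mul_le_mul_of_nonneg_right (hC n j) (norm_nonneg _)))
  simp only [(hasSum_centralQBinom_mul_thetaTerm hq0 (pow_succ_ne_one_of_norm_lt_one hq) hx
    _).tsum_eq, tsum_mul_left] at hdom
  rw [← tendsto_nhds_unique hdom ((tendsto_qPochhammer hq _).mul (tendsto_qPochhammer hq _)),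
    mul_inv_cancel_left₀ (qPochhammerInf_ne_zero hq hq), bilateralTheta]

end InfiniteProducts

section EulerLogDeriv

variable {𝕜 : Type*} [NontriviallyNormedField 𝕜] {f g : 𝕜 → 𝕜} {x : 𝕜}

/-- The logarithmic derivative `x f'(x) / f(x)` of `f` with respect to the Euler vector field
`x d/dx`. Unlike `logDeriv`, it commutes with rescaling of the argument. -/
noncomputable def eulerLogDeriv (f : 𝕜 → 𝕜) (x : 𝕜) : 𝕜 :=
  x * logDeriv f x

theorem eulerLogDeriv_congr (hfg : f =ᶠ[𝓝 x] g) : eulerLogDeriv f x = eulerLogDeriv g x := by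
  rw [eulerLogDeriv, (logDeriv_congr_nhds hfg).eq_of_nhds, eulerLogDeriv]

theorem eulerLogDeriv_const_mul {c : 𝕜} (hc : c ≠ 0) :
    eulerLogDeriv (fun y => c * f y) x = eulerLogDeriv f x := by
  rw [eulerLogDeriv, logDeriv_const_mul x c hc, eulerLogDeriv]

theorem eulerLogDeriv_mul (hf : f x ≠ 0) (hg : g x ≠ 0) (hdf : DifferentiableAt 𝕜 f x)
    (hdg : DifferentiableAt 𝕜 g x) :
    eulerLogDeriv (fun y => f y * g y) x = eulerLogDeriv f x + eulerLogDeriv g x := by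
  rw [eulerLogDeriv, logDeriv_mul x hf hg hdf hdg, mul_add, eulerLogDeriv, eulerLogDeriv]

theorem eulerLogDeriv_zpow (hx : x ≠ 0) (k : ℤ) : eulerLogDeriv (fun y => y ^ k) x = k := by
  rw [eulerLogDeriv, logDeriv_zpow, mul_div_cancel₀ _ hx]

theorem eulerLogDeriv_comp_mul_left (f : 𝕜 → 𝕜) (c x : 𝕜) :
    eulerLogDeriv (fun y => f (c * y)) x = eulerLogDeriv f (c * x) := by
  rw [eulerLogDeriv, eulerLogDeriv, logDeriv_apply, logDeriv_apply, deriv_comp_mul_left,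
    smul_eq_mul]
  ring

theorem eulerLogDeriv_comp_inv (hx : x ≠ 0) (hf : DifferentiableAt 𝕜 f x⁻¹) :
    eulerLogDeriv (fun y => f y⁻¹) x = -eulerLogDeriv f x⁻¹ := by
  have hcomp := logDeriv_comp (g := fun y => y⁻¹) hf (differentiableAt_inv hx)
  rw [eulerLogDeriv, show (fun y => f y⁻¹) = f ∘ fun y => y⁻¹ from rfl, hcomp, deriv_inv,
    eulerLogDeriv]
  field_simp

end EulerLogDeriv

section Holomorphy

variable {q a x : ℂ}

theorem multipliableLocallyUniformlyOn_one_sub_mul_pow (hq : ‖q‖ < 1) (r : ℝ) :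
    MultipliableLocallyUniformlyOn (fun (m : ℕ) (a : ℂ) => 1 - a * q ^ m) (Metric.ball 0 r) := by
  simp only [sub_eq_add_neg]
  refine Summable.multipliableLocallyUniformlyOn_nat_one_add Metric.isOpen_ball
    ((summable_geometric_of_lt_one (norm_nonneg q) hq).mul_left r)
    (.of_forall fun m a ha => ?_) fun m => by fun_prop
  rw [norm_neg, norm_mul, norm_pow]
  gcongr
  exact (mem_ball_zero_iff.1 ha).le

theorem differentiable_qPochhammerInf (hq : ‖q‖ < 1) : Differentiable ℂ (qPochhammerInf q) := by
  intro a
  refine DifferentiableOn.differentiableAt (s := Metric.ball 0 (‖a‖ + 1)) ?_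
    (Metric.isOpen_ball.mem_nhds (by simp))
  exact (multipliableLocallyUniformlyOn_one_sub_mul_pow hq _).hasProdLocallyUniformlyOn
    |>.differentiableOn (.of_forall fun s => by fun_prop) Metric.isOpen_ball

theorem logDeriv_one_sub_mul (c a : ℂ) : logDeriv (fun a => 1 - a * c) a = -c / (1 - a * c) := by
  simp [logDeriv_apply]

theorem eulerLogDeriv_qPochhammerInf_eq_add (hq : ‖q‖ < 1) (hQ : qPochhammerInf q a ≠ 0) :
    eulerLogDeriv (qPochhammerInf q) a =
      -(a / (1 - a)) + eulerLogDeriv (qPochhammerInf q) (a * q) := by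
  have hfun := qPochhammerInf_eq_one_sub_mul hq
  rw [hfun, mul_ne_zero_iff] at hQ
  have hd := differentiable_qPochhammerInf hq
  rw [funext hfun, eulerLogDeriv_mul hQ.1 hQ.2 (by fun_prop) (by fun_prop), ← funext hfun]
  congr 1
  · have hlog := logDeriv_one_sub_mul 1 a
    simp only [mul_one] at hlog
    rw [eulerLogDeriv, hlog, ← mul_div_assoc, mul_neg_one, neg_div]
  · simpa only [mul_comm q] using eulerLogDeriv_comp_mul_left (qPochhammerInf q) q a

theorem norm_eulerLogDeriv_qPochhammerInf_le (hq : ‖q‖ < 1) (ha : ‖a‖ < 1) :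
    ‖eulerLogDeriv (qPochhammerInf q) a‖ ≤ ‖a‖ / ((1 - ‖a‖) * (1 - ‖q‖)) := by
  have hsub := one_sub_norm_le_norm_one_sub_mul_pow hq.le a
  have ha' : 0 < 1 - ‖a‖ := sub_pos.2 ha
  have hbound (m : ℕ) : ‖logDeriv (fun a => 1 - a * q ^ m) a‖ ≤ (1 - ‖a‖)⁻¹ * ‖q‖ ^ m := by
    rw [logDeriv_one_sub_mul, norm_div, norm_neg, norm_pow, inv_mul_eq_div]
    gcongr
    exact hsub m
  have hgeom := (hasSum_geometric_of_lt_one (norm_nonneg q) hq).mul_left (1 - ‖a‖)⁻¹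
  have hlog : logDeriv (qPochhammerInf q) a = ∑' m : ℕ, logDeriv (fun a => 1 - a * q ^ m) a :=
    logDeriv_tprod_eq_tsum Metric.isOpen_ball (mem_ball_zero_iff.2 ha)
      (fun m => norm_pos_iff.1 (ha'.trans_le (hsub m))) (fun m => by fun_prop)
      (hgeom.summable.of_norm_bounded hbound)
      (multipliableLocallyUniformlyOn_one_sub_mul_pow hq 1) (qPochhammerInf_ne_zero hq ha)
  rw [eulerLogDeriv, norm_mul, div_eq_mul_inv, mul_inv, hlog]
  gcongr
  exact tsum_of_norm_bounded hgeom hbound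

theorem differentiable_partialTheta (hq : ‖q‖ < 1) : Differentiable ℂ (partialTheta q) := by
  intro x
  refine DifferentiableOn.differentiableAt (s := Metric.ball 0 (‖x‖ + 1)) ?_
    (Metric.isOpen_ball.mem_nhds (by simp))
  refine Complex.differentiableOn_tsum_of_summable_norm
    (summable_norm_partialTheta hq ((‖x‖ + 1 : ℝ) : ℂ)) (fun j => by fun_prop)
    Metric.isOpen_ball fun j y hy => ?_
  simp only [norm_mul, norm_pow, Complex.norm_real, Real.norm_eq_abs]
  gcongr
  exact (mem_ball_zero_iff.1 hy).le.trans (le_abs_self _)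

theorem differentiableAt_bilateralTheta (hq : ‖q‖ < 1) (hx : x ≠ 0) :
    DifferentiableAt ℂ (bilateralTheta q) x := by
  have hθ := differentiable_partialTheta hq
  rw [funext (bilateralTheta_eq_partialTheta_add hq)]
  exact (hθ x).add ((differentiableAt_inv hx).mul ((hθ _).comp x (differentiableAt_inv hx)))

theorem eulerLogDeriv_bilateralTheta_eq_add (hq0 : q ≠ 0) (hq : ‖q‖ < 1) (hx : x ≠ 0)
    (hJ : bilateralTheta q x ≠ 0) (k : ℤ) :
    eulerLogDeriv (bilateralTheta q) x = k + eulerLogDeriv (bilateralTheta q) (q ^ k * x) := by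
  have hfun : bilateralTheta q =ᶠ[𝓝 x]
      fun y => q ^ (k * (k + 1) / 2) * (y ^ k * bilateralTheta q (q ^ k * y)) := by
    filter_upwards [eventually_ne_nhds hx] with y hy
    rw [bilateralTheta_eq_mul_bilateralTheta_zpow_mul hq0 hq hy k, thetaTerm, mul_assoc]
  have hqx : q ^ k * x ≠ 0 := mul_ne_zero (zpow_ne_zero k hq0) hx
  have hJk : bilateralTheta q (q ^ k * x) ≠ 0 := fun h => hJ <| by
    rw [bilateralTheta_eq_mul_bilateralTheta_zpow_mul hq0 hq hx k, h, mul_zero]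
  rw [eulerLogDeriv_congr hfun, eulerLogDeriv_const_mul (zpow_ne_zero _ hq0),
    eulerLogDeriv_mul (f := fun y => y ^ k) (g := fun y => bilateralTheta q (q ^ k * y))
      (zpow_ne_zero k hx) hJk (differentiableAt_zpow.2 (.inl hx))
      ((differentiableAt_bilateralTheta hq hqx).comp x (by fun_prop)),
    eulerLogDeriv_zpow hx, eulerLogDeriv_comp_mul_left]

theorem eulerLogDeriv_bilateralTheta_eq_qPochhammerInf (hq0 : q ≠ 0) (hq : ‖q‖ < 1) (hx : x ≠ 0)
    (hJ : bilateralTheta q x ≠ 0) :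
    eulerLogDeriv (bilateralTheta q) x = eulerLogDeriv (qPochhammerInf q) (-q * x) -
      (eulerLogDeriv (qPochhammerInf q) (-q * x⁻¹) + (1 + x)⁻¹) := by
  have hfun : bilateralTheta q =ᶠ[𝓝 x] fun y => qPochhammerInf q q *
      (qPochhammerInf q (-q * y) * qPochhammerInf q (-1 * y⁻¹)) := by
    filter_upwards [eventually_ne_nhds hx] with y hy
    rw [bilateralTheta_eq_qPochhammerInf hq0 hq hy, neg_mul, neg_one_mul]
  have hQ := differentiable_qPochhammerInf hq
  obtain ⟨hQq, hQx, hQx'⟩ : _ ∧ _ ∧ _ := by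
    simpa only [hfun.eq_of_nhds, mul_ne_zero_iff] using hJ
  have hinv : eulerLogDeriv (fun y => qPochhammerInf q (-1 * y⁻¹)) x =
      -eulerLogDeriv (qPochhammerInf q) (-1 * x⁻¹) := by
    rw [eulerLogDeriv_comp_inv (f := fun y => qPochhammerInf q (-1 * y)) hx (by fun_prop),
      eulerLogDeriv_comp_mul_left]
  have hfrac : -(-1 * x⁻¹ / (1 - -1 * x⁻¹)) = (1 + x)⁻¹ := by
    rw [neg_one_mul, sub_neg_eq_add, neg_div, neg_neg, inv_eq_one_div x, div_div, mul_add,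
      mul_one_div_cancel hx, mul_one, one_div, add_comm]
  rw [eulerLogDeriv_congr hfun, eulerLogDeriv_const_mul hQq,
    eulerLogDeriv_mul (f := fun y => qPochhammerInf q (-q * y))
      (g := fun y => qPochhammerInf q (-1 * y⁻¹)) hQx hQx' (by fun_prop)
      (by fun_prop (disch := exact hx)),
    eulerLogDeriv_comp_mul_left, hinv, eulerLogDeriv_qPochhammerInf_eq_add hq hQx', hfrac]
  ring_nf

end Holomorphy

section Estimates

variable {t : ℝ}

theorem exp_neg_div_one_sub_exp_neg_two_mul_le (ht : 0 < t) :
    Real.exp (-t) / (1 - Real.exp (-(2 * t))) ≤ 1 / (2 * t) := by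
  have hlt : Real.exp (-(2 * t)) < 1 := Real.exp_lt_one_iff.2 (by linarith)
  rw [div_le_div_iff₀ (sub_pos.2 hlt) (by positivity), one_mul]
  have hsinh : t ≤ (Real.exp t - Real.exp (-t)) / 2 := by
    rw [← Real.sinh_eq]
    exact Real.self_le_sinh_iff.2 ht.le
  calc Real.exp (-t) * (2 * t) ≤ Real.exp (-t) * (Real.exp t - Real.exp (-t)) := by
        gcongr
        linarith
    _ = 1 - Real.exp (-(2 * t)) := by
        rw [mul_sub, ← Real.exp_add, ← Real.exp_add, neg_add_cancel, Real.exp_zero]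
        ring_nf

theorem sum_exp_neg_mul_pow_le (ht : 0 < t) (n : ℕ) :
    ∑ m ∈ range n, Real.exp (-t) * Real.exp (-(2 * t)) ^ m ≤ 1 / (2 * t) := by
  have hgeom := (hasSum_geometric_of_lt_one (Real.exp_pos (-(2 * t))).le
    (Real.exp_lt_one_iff.2 (by linarith))).mul_left (Real.exp (-t))
  exact (sum_le_hasSum _ (fun m _ => by positivity) hgeom).trans
    (exp_neg_div_one_sub_exp_neg_two_mul_le ht)

theorem sum_exp_neg_mul_pow_pow_div_le (ht : 0 < t) (n l : ℕ) :
    ∑ m ∈ range n, (Real.exp (-t) * Real.exp (-(2 * t)) ^ m) ^ (l + 1) / (l + 1) ≤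
      1 / (2 * t) * (1 / ((l + 1 : ℕ) : ℝ) ^ 2) := by
  have hpow (m : ℕ) : (Real.exp (-t) * Real.exp (-(2 * t)) ^ m) ^ (l + 1) =
      Real.exp (-((l + 1 : ℕ) * t)) * Real.exp (-(2 * ((l + 1 : ℕ) * t))) ^ m := by
    simp only [mul_pow, ← Real.exp_nat_mul]
    ring_nf
  have hgeom := sum_exp_neg_mul_pow_le (mul_pos (Nat.cast_pos.2 l.succ_pos) ht) n
  simp only [← hpow] at hgeom
  rw [← sum_div, div_le_iff₀ (by positivity)]
  refine hgeom.trans_eq ?_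
  push_cast
  field_simp

/- Expanding each logarithm and summing over the factors first gives
`-log ∏ (1 - e^{-(2m+1)t}) ≤ ∑ 1 / (2 t l²) = π² / (12 t)`. -/
theorem exp_neg_one_div_le_qPochhammer (ht : 0 < t) (n : ℕ) :
    Real.exp (-(1 / t)) ≤ qPochhammer (Real.exp (-(2 * t))) (Real.exp (-t)) n := by
  set x : ℕ → ℝ := fun m => Real.exp (-t) * Real.exp (-(2 * t)) ^ m
  have hx0 (m : ℕ) : 0 ≤ x m := by positivity
  have hx1 (m : ℕ) : x m < 1 := mul_lt_one_of_nonneg_of_lt_one_left (Real.exp_pos _).le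
    (Real.exp_lt_one_iff.2 (by linarith)) (pow_le_one₀ (Real.exp_pos _).le
      (Real.exp_le_one_iff.2 (by linarith)))
  have hpos (m : ℕ) : 0 < 1 - x m := sub_pos.2 (hx1 m)
  have hlog : HasSum (fun l : ℕ => ∑ m ∈ range n, x m ^ (l + 1) / (l + 1))
      (∑ m ∈ range n, -Real.log (1 - x m)) :=
    hasSum_sum fun m _ => Real.hasSum_pow_div_log_of_abs_lt_one
      ((abs_of_nonneg (hx0 m)).trans_lt (hx1 m))
  have hzeta : HasSum (fun l : ℕ => 1 / (2 * t) * (1 / ((l + 1 : ℕ) : ℝ) ^ 2))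
      (1 / (2 * t) * (Real.pi ^ 2 / 6)) := by
    simpa using ((hasSum_nat_add_iff' 1).2 hasSum_zeta_two).mul_left (1 / (2 * t))
  have hsum : ∑ m ∈ range n, -Real.log (1 - x m) ≤ 1 / t := by
    refine (hasSum_le (sum_exp_neg_mul_pow_pow_div_le ht n) hlog hzeta).trans ?_
    have hpi : Real.pi ^ 2 ≤ 12 := by nlinarith [Real.pi_lt_d2, Real.pi_pos]
    rw [one_div_mul_eq_div, div_le_div_iff₀ (by positivity) ht]
    nlinarith
  rw [sum_neg_distrib, ← Real.log_prod fun m _ => (hpos m).ne', neg_le] at hsum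
  exact (Real.le_log_iff_exp_le (prod_pos fun m _ => hpos m)).1 hsum

variable {q a y : ℂ}

theorem exp_neg_one_div_le_norm_qPochhammerInf (ht : 0 < t) (hq : ‖q‖ = Real.exp (-(2 * t)))
    (ha : ‖a‖ ≤ Real.exp (-t)) : Real.exp (-(1 / t)) ≤ ‖qPochhammerInf q a‖ := by
  have hq1 : ‖q‖ < 1 := hq ▸ Real.exp_lt_one_iff.2 (by linarith)
  refine le_trans ?_ (qPochhammerInf_norm_le_norm hq1 ha (Real.exp_le_one_iff.2 (by linarith)))
  rw [hq]
  exact ge_of_tendsto' (tendsto_qPochhammer (by rwa [← hq, norm_norm]) _)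
    (exp_neg_one_div_le_qPochhammer ht)

theorem norm_eulerLogDeriv_qPochhammerInf_le_of_norm_eq_exp (ht : 0 < t)
    (hq : ‖q‖ = Real.exp (-(2 * t))) (ha : ‖a‖ ≤ Real.exp (-t)) :
    ‖eulerLogDeriv (qPochhammerInf q) a‖ ≤ 1 / (2 * t) * (1 + 1 / t) := by
  have hq1 : ‖q‖ < 1 := hq ▸ Real.exp_lt_one_iff.2 (by linarith)
  have hs1 : Real.exp (-t) < 1 := Real.exp_lt_one_iff.2 (by linarith)
  have hinv : 1 / (1 - Real.exp (-t)) ≤ 1 + 1 / t := by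
    have hexp : Real.exp (-t) ≤ 1 / (1 + t) := by
      rw [Real.exp_neg, ← one_div]
      gcongr
      linarith [Real.add_one_le_exp t]
    calc 1 / (1 - Real.exp (-t)) ≤ 1 / (1 - 1 / (1 + t)) := by
          gcongr
          rw [sub_pos, div_lt_one (by positivity)]
          linarith
      _ = 1 + 1 / t := by
          have hsub : 1 - 1 / (1 + t) = t / (1 + t) := by
            field_simp
            ring
          rw [hsub, one_div_div, add_div, div_self ht.ne', add_comm]
  calc ‖eulerLogDeriv (qPochhammerInf q) a‖ ≤ ‖a‖ / ((1 - ‖a‖) * (1 - ‖q‖)) :=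
        norm_eulerLogDeriv_qPochhammerInf_le hq1 (ha.trans_lt hs1)
    _ ≤ Real.exp (-t) / ((1 - Real.exp (-t)) * (1 - ‖q‖)) := by
        have := sub_pos.2 hs1
        have := sub_pos.2 hq1
        gcongr
    _ = Real.exp (-t) / (1 - Real.exp (-(2 * t))) * (1 / (1 - Real.exp (-t))) := by
        rw [hq, mul_comm (1 - Real.exp (-t)), div_mul_div_comm, mul_one]
    _ ≤ 1 / (2 * t) * (1 + 1 / t) :=
        mul_le_mul (exp_neg_div_one_sub_exp_neg_two_mul_le ht) hinv
          (one_div_nonneg.2 (sub_nonneg.2 hs1.le)) (by positivity)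

theorem norm_neg_mul_le_exp_neg (hq : ‖q‖ = Real.exp (-(2 * t))) (hy : ‖y‖ ≤ Real.exp t) :
    ‖-q * y‖ ≤ Real.exp (-t) := by
  calc ‖-q * y‖ ≤ Real.exp (-(2 * t)) * Real.exp t := by
        rw [norm_mul, norm_neg, hq]
        gcongr
    _ = Real.exp (-t) := by
        rw [← Real.exp_add]
        ring_nf

theorem norm_one_add_inv_mul_exp_le_norm_bilateralTheta (ht : 0 < t)
    (hq : ‖q‖ = Real.exp (-(2 * t))) (hy0 : y ≠ 0) (hy : ‖y‖ ≤ Real.exp t)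
    (hy' : ‖y⁻¹‖ ≤ Real.exp t) :
    ‖1 + y⁻¹‖ * Real.exp (-(3 / t)) ≤ ‖bilateralTheta q y‖ := by
  have hq0 : q ≠ 0 := norm_pos_iff.1 (hq ▸ Real.exp_pos _)
  have hq1 : ‖q‖ < 1 := hq ▸ Real.exp_lt_one_iff.2 (by linarith)
  have hexp : Real.exp (-(3 / t)) =
      Real.exp (-(1 / t)) * (Real.exp (-(1 / t)) * Real.exp (-(1 / t))) := by
    rw [← Real.exp_add, ← Real.exp_add]
    ring_nf
  have hfactor : bilateralTheta q y = (1 + y⁻¹) *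
      (qPochhammerInf q q * (qPochhammerInf q (-q * y) * qPochhammerInf q (-q * y⁻¹))) := by
    rw [bilateralTheta_eq_qPochhammerInf hq0 hq1 hy0, qPochhammerInf_eq_one_sub_mul hq1 (-y⁻¹)]
    ring_nf
  rw [hfactor, hexp, norm_mul, norm_mul, norm_mul]
  gcongr <;> refine exp_neg_one_div_le_norm_qPochhammerInf ht hq ?_
  · exact hq.trans_le (Real.exp_le_exp.2 (by linarith))
  · exact norm_neg_mul_le_exp_neg hq hy
  · exact norm_neg_mul_le_exp_neg hq hy'

theorem norm_one_add_inv_le_norm_eulerLogDeriv_bilateralTheta (ht : 0 < t)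
    (hq : ‖q‖ = Real.exp (-(2 * t))) (hy0 : y ≠ 0) (hy : ‖y‖ ≤ Real.exp t)
    (hy' : ‖y⁻¹‖ ≤ Real.exp t) (hJ : bilateralTheta q y ≠ 0) :
    ‖(1 + y)⁻¹‖ ≤ ‖eulerLogDeriv (bilateralTheta q) y‖ + 1 / t * (1 + 1 / t) := by
  have hq0 : q ≠ 0 := norm_pos_iff.1 (hq ▸ Real.exp_pos _)
  have hq1 : ‖q‖ < 1 := hq ▸ Real.exp_lt_one_iff.2 (by linarith)
  have hplus := norm_eulerLogDeriv_qPochhammerInf_le_of_norm_eq_exp ht hq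
    (norm_neg_mul_le_exp_neg hq hy)
  have hminus := norm_eulerLogDeriv_qPochhammerInf_le_of_norm_eq_exp ht hq
    (norm_neg_mul_le_exp_neg hq hy')
  have heq := eulerLogDeriv_bilateralTheta_eq_qPochhammerInf hq0 hq1 hy0 hJ
  set P := eulerLogDeriv (qPochhammerInf q) (-q * y)
  set M := eulerLogDeriv (qPochhammerInf q) (-q * y⁻¹)
  calc ‖(1 + y)⁻¹‖ = ‖P - M - eulerLogDeriv (bilateralTheta q) y‖ := by
        rw [heq]
        ring_nf
    _ ≤ ‖P‖ + ‖M‖ + ‖eulerLogDeriv (bilateralTheta q) y‖ :=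
        (norm_sub_le _ _).trans (add_le_add_left (norm_sub_le _ _) _)
    _ ≤ 1 / (2 * t) * (1 + 1 / t) + 1 / (2 * t) * (1 + 1 / t) +
          ‖eulerLogDeriv (bilateralTheta q) y‖ := by gcongr
    _ = ‖eulerLogDeriv (bilateralTheta q) y‖ + 1 / t * (1 + 1 / t) := by
        field_simp
        ring

end Estimates

section MultipleZeros

theorem norm_partialTheta_sub_one_le {𝕜 : Type*} [NormedField 𝕜] [CompleteSpace 𝕜] {q x : 𝕜}
    (hq : ‖q‖ < 1) (hx : ‖x‖ < 1) : ‖partialTheta q x - 1‖ ≤ ‖x‖ / (1 - ‖x‖) := by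
  have hsum := (summable_norm_partialTheta hq x).of_norm.hasSum
  rw [← hasSum_nat_add_iff' 1] at hsum
  have hgeom := (hasSum_geometric_of_lt_one (norm_nonneg x) hx).mul_left ‖x‖
  rw [← div_eq_mul_inv] at hgeom
  have hbound := hsum.norm_le_of_bounded hgeom fun j => ?_
  · simpa [partialTheta] using hbound
  · rw [norm_mul, norm_pow, norm_pow, ← pow_succ']
    exact mul_le_of_le_one_left (by positivity) (pow_le_one₀ (norm_nonneg q) hq.le)

variable {q u ζ : ℂ}

theorem norm_partialTheta_sub_one_le_half (hq : ‖q‖ < 1) (hu : ‖u‖ ≤ 1 / 8) :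
    ‖partialTheta q u - 1‖ ≤ 1 / 2 := by
  refine (norm_partialTheta_sub_one_le hq (by linarith)).trans ?_
  rw [div_le_iff₀ (by linarith)]
  linarith

theorem norm_partialTheta_le_two (hq : ‖q‖ < 1) (hu : ‖u‖ ≤ 1 / 8) : ‖partialTheta q u‖ ≤ 2 := by
  have hsub := norm_sub_norm_le (partialTheta q u) 1
  rw [norm_one] at hsub
  linarith [norm_partialTheta_sub_one_le_half hq hu]

theorem half_le_norm_partialTheta (hq : ‖q‖ < 1) (hu : ‖u‖ ≤ 1 / 8) :
    1 / 2 ≤ ‖partialTheta q u‖ := by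
  have hsub := norm_sub_norm_le 1 (partialTheta q u)
  rw [norm_one, norm_sub_rev] at hsub
  linarith [norm_partialTheta_sub_one_le_half hq hu]

theorem norm_eulerLogDeriv_partialTheta_le_one (hq : ‖q‖ < 1) (hu : ‖u‖ ≤ 1 / 8) :
    ‖eulerLogDeriv (partialTheta q) u‖ ≤ 1 := by
  have hsphere : ∀ v ∈ Metric.sphere u (3 / 8), ‖partialTheta q v - 1‖ ≤ 1 := fun v hv => by
    have hv' : ‖v‖ ≤ 1 / 2 := by
      linarith [norm_le_norm_add_norm_sub' v u, mem_sphere_iff_norm.1 hv]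
    refine (norm_partialTheta_sub_one_le hq (by linarith)).trans ?_
    rw [div_le_iff₀ (by linarith)]
    linarith
  have hcauchy : ‖deriv (partialTheta q) u‖ ≤ 1 / (3 / 8) := by
    simpa only [deriv_sub_const] using Complex.norm_deriv_le_of_forall_mem_sphere_norm_le
      (by norm_num) ((differentiable_partialTheta hq).sub_const 1).diffContOnCl hsphere
  calc ‖eulerLogDeriv (partialTheta q) u‖
      = ‖u‖ * (‖deriv (partialTheta q) u‖ / ‖partialTheta q u‖) := by
        rw [eulerLogDeriv, logDeriv_apply, norm_mul, norm_div]
    _ ≤ 1 / 8 * (1 / (3 / 8) / (1 / 2)) := by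
        gcongr
        exact half_le_norm_partialTheta hq hu
    _ ≤ 1 := by norm_num

theorem bilateralTheta_eq_of_partialTheta_eq_zero (hq : ‖q‖ < 1) (hzero : partialTheta q ζ = 0) :
    bilateralTheta q ζ = ζ⁻¹ * partialTheta q ζ⁻¹ := by
  rw [bilateralTheta_eq_partialTheta_add hq, hzero, zero_add]

theorem eulerLogDeriv_bilateralTheta_of_multiple_zero (hq : ‖q‖ < 1) (hζ : ζ ≠ 0)
    (hzero : partialTheta q ζ = 0) (hderiv : deriv (partialTheta q) ζ = 0)
    (hinv : partialTheta q ζ⁻¹ ≠ 0) :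
    eulerLogDeriv (bilateralTheta q) ζ = -(1 + eulerLogDeriv (partialTheta q) ζ⁻¹) := by
  have hθ := differentiable_partialTheta hq
  have hd : DifferentiableAt ℂ (fun y => y⁻¹ * partialTheta q y⁻¹) ζ :=
    (differentiableAt_inv hζ).mul ((hθ _).comp ζ (differentiableAt_inv hζ))
  have hfun := funext (bilateralTheta_eq_partialTheta_add hq)
  have htail : eulerLogDeriv (bilateralTheta q) ζ =
      eulerLogDeriv (fun y => y⁻¹ * partialTheta q y⁻¹) ζ := by
    rw [hfun, eulerLogDeriv, eulerLogDeriv, logDeriv_apply, logDeriv_apply,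
      deriv_fun_add (hθ ζ) hd, hderiv, hzero, zero_add, zero_add]
  rw [htail, eulerLogDeriv_comp_inv (f := fun y => y * partialTheta q y) hζ (by fun_prop),
    eulerLogDeriv_mul (f := fun y => y) (inv_ne_zero hζ) hinv (by fun_prop) (by fun_prop)]
  congr 2
  simpa using eulerLogDeriv_zpow (inv_ne_zero hζ) 1

theorem norm_inv_le_one_eighth (hζ : 8 ≤ ‖ζ‖) : ‖ζ⁻¹‖ ≤ 1 / 8 := by
  rw [norm_inv, ← one_div]
  gcongr

theorem norm_bilateralTheta_le_of_partialTheta_eq_zero (hq : ‖q‖ < 1) (hζ : 8 ≤ ‖ζ‖)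
    (hzero : partialTheta q ζ = 0) : ‖bilateralTheta q ζ‖ ≤ 2 / ‖ζ‖ := by
  rw [bilateralTheta_eq_of_partialTheta_eq_zero hq hzero, norm_mul, norm_inv, inv_mul_eq_div]
  gcongr
  exact norm_partialTheta_le_two hq (norm_inv_le_one_eighth hζ)

theorem bilateralTheta_ne_zero_of_partialTheta_eq_zero (hq : ‖q‖ < 1) (hζ : 8 ≤ ‖ζ‖)
    (hzero : partialTheta q ζ = 0) : bilateralTheta q ζ ≠ 0 := by
  rw [bilateralTheta_eq_of_partialTheta_eq_zero hq hzero]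
  have hθ := half_le_norm_partialTheta hq (norm_inv_le_one_eighth hζ)
  exact mul_ne_zero (inv_ne_zero (norm_pos_iff.1 (by linarith))) (norm_pos_iff.1 (by linarith))

theorem norm_eulerLogDeriv_bilateralTheta_le_two_of_multiple_zero (hq : ‖q‖ < 1) (hζ : 8 ≤ ‖ζ‖)
    (hzero : partialTheta q ζ = 0) (hderiv : deriv (partialTheta q) ζ = 0) :
    ‖eulerLogDeriv (bilateralTheta q) ζ‖ ≤ 2 := by
  have hu := norm_inv_le_one_eighth hζ
  have hθ := half_le_norm_partialTheta hq hu
  rw [eulerLogDeriv_bilateralTheta_of_multiple_zero hq (norm_pos_iff.1 (by linarith)) hzero hderiv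
    (norm_pos_iff.1 (by linarith)), norm_neg]
  refine (norm_add_le _ _).trans ?_
  rw [norm_one]
  linarith [norm_eulerLogDeriv_partialTheta_le_one hq hu]

end MultipleZeros

section MultipleZeroBound

variable {t : ℝ} {q x : ℂ}

theorem exists_norm_eq_exp_neg_two_mul (hq0 : q ≠ 0) (hq : ‖q‖ < 1) :
    ∃ t : ℝ, 0 < t ∧ ‖q‖ = Real.exp (-(2 * t)) :=
  have hpos := norm_pos_iff.2 hq0
  ⟨-Real.log ‖q‖ / 2, by linarith [Real.log_neg hpos hq],
    by rw [mul_div_cancel₀ _ two_ne_zero, neg_neg, Real.exp_log hpos]⟩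

theorem log_norm_zpow_mul (hq : ‖q‖ = Real.exp (-(2 * t))) (hx : x ≠ 0) (k : ℤ) :
    Real.log ‖q ^ k * x‖ = Real.log ‖x‖ - 2 * t * k := by
  rw [norm_mul, norm_zpow, hq, Real.log_mul (zpow_pos (Real.exp_pos _) k).ne'
    (norm_ne_zero_iff.2 hx), Real.log_zpow, Real.log_exp]
  ring

theorem exists_abs_log_norm_zpow_mul_le (ht : 0 < t) (hq : ‖q‖ = Real.exp (-(2 * t)))
    (hx : x ≠ 0) : ∃ k : ℤ, |Real.log ‖q ^ k * x‖| ≤ t := by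
  refine ⟨round (Real.log ‖x‖ / (2 * t)), ?_⟩
  have hround := abs_sub_round (Real.log ‖x‖ / (2 * t))
  set k := round (Real.log ‖x‖ / (2 * t))
  have hscale : Real.log ‖x‖ - 2 * t * k = 2 * t * (Real.log ‖x‖ / (2 * t) - k) := by
    field_simp
  rw [log_norm_zpow_mul hq hx, hscale, abs_mul, abs_of_pos (by positivity)]
  nlinarith

theorem norm_le_exp_of_abs_log_norm_le (hx : x ≠ 0) (h : |Real.log ‖x‖| ≤ t) :
    ‖x‖ ≤ Real.exp t ∧ ‖x⁻¹‖ ≤ Real.exp t := by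
  have hpos := norm_pos_iff.2 hx
  rw [norm_inv, ← Real.log_le_iff_le_exp hpos, ← Real.log_le_iff_le_exp (inv_pos.2 hpos),
    Real.log_inv]
  exact ⟨(abs_le.1 h).2, neg_le.1 (abs_le.1 h).1⟩

theorem norm_thetaTerm (hq : ‖q‖ = Real.exp (-(2 * t))) (hx : x ≠ 0) (k : ℤ) :
    ‖thetaTerm q x k‖ = Real.exp (k * Real.log ‖x‖ - t * (k * (k + 1))) := by
  have hk : 2 * ((k * (k + 1) / 2 : ℤ) : ℝ) = k * (k + 1) := by
    exact_mod_cast Int.mul_ediv_cancel' (Int.even_mul_succ_self k).two_dvd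
  have hexp (n : ℤ) (r : ℝ) : Real.exp r ^ n = Real.exp (n * r) := by
    rw [← Real.rpow_intCast, ← Real.exp_mul, mul_comm]
  rw [thetaTerm, norm_mul, norm_zpow, norm_zpow, hq, hexp,
    show ‖x‖ ^ k = Real.exp (k * Real.log ‖x‖) by
      rw [← hexp, Real.exp_log (norm_pos_iff.2 hx)], ← Real.exp_add, ← hk]
  ring_nf

theorem exp_mul_norm_one_add_le_norm_bilateralTheta (ht : 0 < t)
    (hq : ‖q‖ = Real.exp (-(2 * t))) (hx : x ≠ 0) {k : ℤ} (hk : 1 ≤ k)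
    (hlog : |Real.log ‖q ^ k * x‖| ≤ t) :
    Real.exp (t * (k - 1) ^ 2 - 3 / t) * ‖1 + q ^ k * x‖ ≤ ‖bilateralTheta q x‖ := by
  have hq0 : q ≠ 0 := norm_pos_iff.1 (hq ▸ Real.exp_pos _)
  have hq1 : ‖q‖ < 1 := hq ▸ Real.exp_lt_one_iff.2 (by linarith)
  have hy0 : q ^ k * x ≠ 0 := mul_ne_zero (zpow_ne_zero k hq0) hx
  obtain ⟨hy, hy'⟩ := norm_le_exp_of_abs_log_norm_le hy0 hlog
  have hlower := norm_one_add_inv_mul_exp_le_norm_bilateralTheta ht hq hy0 hy hy'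
  have hlogx := log_norm_zpow_mul hq hx k
  set y := q ^ k * x
  have hinv : ‖1 + y⁻¹‖ = ‖1 + y‖ * Real.exp (-Real.log ‖y‖) := by
    rw [Real.exp_neg, Real.exp_log (norm_pos_iff.2 hy0), ← norm_inv, ← norm_mul, add_mul,
      mul_inv_cancel₀ hy0, one_mul, add_comm]
  have hexponent : t * (k - 1) ^ 2 - 3 / t ≤
      k * Real.log ‖x‖ - t * (k * (k + 1)) + (-Real.log ‖y‖ + -(3 / t)) := by
    have hk' : (0 : ℝ) ≤ k - 1 := sub_nonneg.2 (by exact_mod_cast hk)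
    have hmul := mul_le_mul_of_nonneg_left (abs_le.1 hlog).1 hk'
    linear_combination hmul + k * hlogx
  calc Real.exp (t * (k - 1) ^ 2 - 3 / t) * ‖1 + y‖
      ≤ Real.exp (k * Real.log ‖x‖ - t * (k * (k + 1)) + (-Real.log ‖y‖ + -(3 / t))) *
          ‖1 + y‖ := by gcongr
    _ = ‖thetaTerm q x k‖ * (‖1 + y⁻¹‖ * Real.exp (-(3 / t))) := by
        rw [norm_thetaTerm hq hx, hinv, Real.exp_add, Real.exp_add]
        ring
    _ ≤ ‖thetaTerm q x k‖ * ‖bilateralTheta q y‖ := by gcongr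
    _ = ‖bilateralTheta q x‖ := by
        rw [← norm_mul, ← bilateralTheta_eq_mul_bilateralTheta_zpow_mul hq0 hq1 hx]

theorem norm_inv_one_add_zpow_mul_le (ht : 0 < t) (hq : ‖q‖ = Real.exp (-(2 * t))) (hx : x ≠ 0)
    (hJ : bilateralTheta q x ≠ 0) {k : ℤ} (hk : 0 ≤ k) (hlog : |Real.log ‖q ^ k * x‖| ≤ t) :
    ‖(1 + q ^ k * x)⁻¹‖ ≤
      ‖eulerLogDeriv (bilateralTheta q) x‖ + k + 1 / t * (1 + 1 / t) := by
  have hq0 : q ≠ 0 := norm_pos_iff.1 (hq ▸ Real.exp_pos _)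
  have hq1 : ‖q‖ < 1 := hq ▸ Real.exp_lt_one_iff.2 (by linarith)
  have hy0 : q ^ k * x ≠ 0 := mul_ne_zero (zpow_ne_zero k hq0) hx
  obtain ⟨hy, hy'⟩ := norm_le_exp_of_abs_log_norm_le hy0 hlog
  have hJy : bilateralTheta q (q ^ k * x) ≠ 0 := fun h => hJ <| by
    rw [bilateralTheta_eq_mul_bilateralTheta_zpow_mul hq0 hq1 hx k, h, mul_zero]
  have hshift : ‖eulerLogDeriv (bilateralTheta q) (q ^ k * x)‖ ≤
      ‖eulerLogDeriv (bilateralTheta q) x‖ + k := by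
    rw [← sub_eq_iff_eq_add'.2 (eulerLogDeriv_bilateralTheta_eq_add hq0 hq1 hx hJ k)]
    refine (norm_sub_le _ _).trans_eq ?_
    rw [Complex.norm_intCast, abs_of_nonneg (by exact_mod_cast hk)]
  exact (norm_one_add_inv_le_norm_eulerLogDeriv_bilateralTheta ht hq hy0 hy hy' hJy).trans
    (add_le_add_left hshift _)

theorem bilateralTheta_neg_one (hq : ‖q‖ < 1) : bilateralTheta q (-1) = 0 := by
  rw [bilateralTheta_eq_partialTheta_add hq, inv_neg_one, neg_one_mul, add_neg_cancel]

theorem exp_le_norm_bilateralTheta_mul (ht : 0 < t) (hq : ‖q‖ = Real.exp (-(2 * t))) (hx : x ≠ 0)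
    (hJ : bilateralTheta q x ≠ 0) {k : ℤ} (hk : 1 ≤ k) (hlog : |Real.log ‖q ^ k * x‖| ≤ t) :
    Real.exp (t * (k - 1) ^ 2 - 3 / t) ≤ ‖bilateralTheta q x‖ *
      (‖eulerLogDeriv (bilateralTheta q) x‖ + k + 1 / t * (1 + 1 / t)) := by
  have hq0 : q ≠ 0 := norm_pos_iff.1 (hq ▸ Real.exp_pos _)
  have hq1 : ‖q‖ < 1 := hq ▸ Real.exp_lt_one_iff.2 (by linarith)
  have hy : 1 + q ^ k * x ≠ 0 := fun h => hJ <| by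
    rw [bilateralTheta_eq_mul_bilateralTheta_zpow_mul hq0 hq1 hx k, eq_neg_of_add_eq_zero_right h,
      bilateralTheta_neg_one hq1, mul_zero]
  calc Real.exp (t * (k - 1) ^ 2 - 3 / t)
      = Real.exp (t * (k - 1) ^ 2 - 3 / t) * ‖1 + q ^ k * x‖ * ‖(1 + q ^ k * x)⁻¹‖ := by
        rw [norm_inv, mul_inv_cancel_right₀ (norm_ne_zero_iff.2 hy)]
    _ ≤ _ := mul_le_mul (exp_mul_norm_one_add_le_norm_bilateralTheta ht hq hx hk hlog)
        (norm_inv_one_add_zpow_mul_le ht hq hx hJ (by lia) hlog) (norm_nonneg _) (norm_nonneg _)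

theorem one_fourth_le_norm_bilateralTheta (ht : 6 ≤ t) (hq : ‖q‖ = Real.exp (-(2 * t)))
    (hx : 2 ≤ ‖x‖) (hx' : ‖x‖ ≤ Real.exp t) : 1 / 4 ≤ ‖bilateralTheta q x‖ := by
  have hx0 : x ≠ 0 := norm_pos_iff.1 (by linarith)
  have hinv : ‖x⁻¹‖ ≤ 1 / 2 := by
    rw [norm_inv, ← one_div]
    gcongr
  have hone : 1 / 2 ≤ ‖1 + x⁻¹‖ := by
    have hsub := norm_sub_norm_le 1 (-x⁻¹)
    rw [norm_one, norm_neg, sub_neg_eq_add] at hsub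
    linarith
  have hexp : 1 / 2 ≤ Real.exp (-(3 / t)) := by
    have hdiv : 3 / t ≤ 1 / 2 := by
      rw [div_le_div_iff₀ (by linarith) two_pos]
      linarith
    linarith [Real.one_sub_le_exp_neg (3 / t)]
  calc (1 / 4 : ℝ) = 1 / 2 * (1 / 2) := by norm_num
    _ ≤ ‖1 + x⁻¹‖ * Real.exp (-(3 / t)) := by gcongr
    _ ≤ ‖bilateralTheta q x‖ :=
        norm_one_add_inv_mul_exp_le_norm_bilateralTheta (by linarith) hq hx0 hx'
          (hinv.trans (by linarith [Real.add_one_le_exp t]))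

theorem add_lt_two_pow_mul_exp {κ : ℝ} (ht : 0 < t) (hκ : 0 ≤ κ) (hlog : 22 < (2 * κ + 3) * t) :
    3 + κ + 1 / t * (1 + 1 / t) < 2 ^ 32 * Real.exp (t * κ ^ 2 - 3 / t) := by
  have htb : t * (1 / t) = 1 := mul_one_div_cancel ht.ne'
  have hb0 : 0 < 1 / t := by positivity
  rw [div_eq_mul_one_div 3 t]
  set b := 1 / t
  obtain hhalf | hhalf := le_or_gt (1 / 2) t
  · have hb : b ≤ 2 := by nlinarith
    have hexp : 1 / 2 ^ 12 * (1 + κ ^ 2 / 2) ≤ Real.exp (t * κ ^ 2 - 3 * b) := by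
      have hsix : (1 / 2 ^ 12 : ℝ) ≤ Real.exp (-6) := by
        have he : Real.exp 1 ≤ 4 := by linarith [Real.exp_one_lt_d9]
        have hpow : Real.exp 6 = Real.exp 1 ^ 6 := by
          rw [← Real.exp_nat_mul]
          norm_num
        rw [Real.exp_neg, hpow, one_div, show (2 : ℝ) ^ 12 = 4 ^ 6 by norm_num]
        gcongr
      calc 1 / 2 ^ 12 * (1 + κ ^ 2 / 2) ≤ Real.exp (-6) * Real.exp (κ ^ 2 / 2) := by
            gcongr
            linarith [Real.add_one_le_exp (κ ^ 2 / 2)]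
        _ ≤ Real.exp (t * κ ^ 2 - 3 * b) := by
            rw [← Real.exp_add]
            gcongr
            nlinarith [sq_nonneg κ]
    nlinarith [sq_nonneg (κ - 1)]
  · have hκt : 10 ≤ κ * t := by nlinarith
    have hκ20 : 20 ≤ κ := by nlinarith [hκt]
    have hb : b ≤ κ / 10 := by nlinarith [hκt]
    have hexp : 1 + 9 * κ + (9 * κ) ^ 2 / 2 ≤ Real.exp (t * κ ^ 2 - 3 * b) :=
      (Real.quadratic_le_exp_of_nonneg (by positivity)).trans
        (Real.exp_le_exp.2 (by nlinarith [hκt]))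
    nlinarith

theorem one_lt_two_pow_mul_norm_bilateralTheta (hq0 : q ≠ 0) (hq : ‖q‖ < 1)
    (hx : 22 < Real.log ‖x‖) (hJ : bilateralTheta q x ≠ 0)
    (hD : ‖eulerLogDeriv (bilateralTheta q) x‖ ≤ 2) : 1 < 2 ^ 32 * ‖bilateralTheta q x‖ := by
  obtain ⟨t, ht, hqt⟩ := exists_norm_eq_exp_neg_two_mul hq0 hq
  have hx0 : x ≠ 0 := by
    rintro rfl
    norm_num at hx
  obtain ⟨k, hk⟩ := exists_abs_log_norm_zpow_mul_le ht hqt hx0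
  have hupper := (abs_le.1 (log_norm_zpow_mul hqt hx0 k ▸ hk)).2
  obtain hk1 | hk0 := le_or_gt 1 k
  · have hnum := add_lt_two_pow_mul_exp ht (κ := k - 1) (sub_nonneg.2 (by exact_mod_cast hk1))
      (by linarith)
    set E := Real.exp (t * (k - 1) ^ 2 - 3 / t)
    have hE : E * 1 < E * (2 ^ 32 * ‖bilateralTheta q x‖) := calc
      E * 1 ≤ ‖bilateralTheta q x‖ *
          (‖eulerLogDeriv (bilateralTheta q) x‖ + k + 1 / t * (1 + 1 / t)) :=
        (mul_one E).trans_le (exp_le_norm_bilateralTheta_mul ht hqt hx0 hJ hk1 hk)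
      _ ≤ ‖bilateralTheta q x‖ * (3 + (k - 1) + 1 / t * (1 + 1 / t)) :=
        mul_le_mul_of_nonneg_left (by linarith) (norm_nonneg _)
      _ < ‖bilateralTheta q x‖ * (2 ^ 32 * E) := by gcongr
      _ = E * (2 ^ 32 * ‖bilateralTheta q x‖) := by ring
    exact lt_of_mul_lt_mul_left hE (Real.exp_pos _).le
  · have hk' : t * k ≤ 0 :=
      mul_nonpos_of_nonneg_of_nonpos ht.le (by exact_mod_cast Int.lt_add_one_iff.1 hk0)
    have hxt : ‖x‖ ≤ Real.exp t :=
      (Real.log_le_iff_le_exp (norm_pos_iff.2 hx0)).1 (by linarith)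
    have hx2 : 2 ≤ ‖x‖ := by linarith [Real.log_le_sub_one_of_pos (norm_pos_iff.2 hx0)]
    linarith [one_fourth_le_norm_bilateralTheta (by linarith) hqt hx2 hxt]

theorem log_gt_of_eight_pow_lt {X : ℝ} (hX : 8 ^ 11 < X) : 22 < Real.log X := by
  have hlog : Real.log (8 ^ 11 : ℝ) = 33 * Real.log 2 := by
    rw [show (8 : ℝ) ^ 11 = 2 ^ 33 by norm_num, Real.log_pow]
    norm_num
  linarith [Real.log_lt_log (by norm_num) hX, Real.log_two_gt_d9]

end MultipleZeroBound

end PartialTheta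

open PartialTheta

/-- For any complex `q` with `0 < |q| < 1`, every multiple zero `ζ` of the partial theta
function `θ(q,·) = ∑ q^{j(j+1)/2} x^j` satisfies `|ζ| ≤ 8^11`. -/
theorem partialTheta_multiple_zero_bound (q : ℂ) (hq0 : 0 < ‖q‖) (hq1 : ‖q‖ < 1) (ζ : ℂ)
    (hzero : ∑' j : ℕ, q ^ (j * (j + 1) / 2) * ζ ^ j = 0)
    (hderiv : deriv (fun x : ℂ => ∑' j : ℕ, q ^ (j * (j + 1) / 2) * x ^ j) ζ = 0) :
    ‖ζ‖ ≤ 8 ^ 11 := by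
  by_contra! hlarge
  have hζ : 8 ≤ ‖ζ‖ := by linarith
  have hsmall : ‖bilateralTheta q ζ‖ ≤ 2 / ‖ζ‖ :=
    norm_bilateralTheta_le_of_partialTheta_eq_zero hq1 hζ hzero
  have hD : ‖eulerLogDeriv (bilateralTheta q) ζ‖ ≤ 2 :=
    norm_eulerLogDeriv_bilateralTheta_le_two_of_multiple_zero hq1 hζ hzero hderiv
  have hbig : 1 < 2 ^ 32 * ‖bilateralTheta q ζ‖ :=
    one_lt_two_pow_mul_norm_bilateralTheta (norm_pos_iff.1 hq0) hq1
      (log_gt_of_eight_pow_lt hlarge)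
      (bilateralTheta_ne_zero_of_partialTheta_eq_zero hq1 hζ hzero) hD
  rw [le_div_iff₀ (by linarith)] at hsmall
  nlinarith
end

section
/- Let q ∈ ℂ with 0 < |q| < 1 satisfy 2 Σ_{ν=1}^∞ |q|^{ν²/2} ≤ 1 (this holds precisely for |q| ≤ c₀, where c₀ = 0.2078750206… is the root of 2 Σ_{ν=1}^∞ t^{ν²/2} = 1). Then the function θ(q,·) has no multiple zeros: there is no ζ ∈ ℂ with θ(q,ζ) = 0 and ∂θ/∂x(q,ζ) = 0. -/
/-!
On the circle `‖x‖ = ‖q‖ ^ (-(k + 1/2))` the `j`-th and the `k`-th terms of the partial theta series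
have ratio of norm `‖q‖ ^ ((j - k)² / 2)`. Hence, if `2 ∑_{ν ≥ 1} ‖q‖ ^ (ν² / 2) ≤ 1`, the `k`-th
term exceeds the sum of all the others in norm, strictly because only finitely many terms precede
it. By Rouché's theorem the closed disc bounded by this circle contains exactly `k` zeros, counted
with multiplicity. Passing from one disc to the next adds a single zero, which is therefore simple.
-/

open Complex Filter Metric MeromorphicOn Topology
open scoped Real

section Divisor

variable {𝕜 E : Type*} [NontriviallyNormedField 𝕜] [NormedAddCommGroup E] [NormedSpace 𝕜 E]
  {f : 𝕜 → E} {U V : Set 𝕜} {z : 𝕜}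

theorem divisor_eq_zero_of_analyticAt (hf : AnalyticAt 𝕜 f z) (hz : f z ≠ 0) :
    divisor f U z = 0 := by
  rw [divisor_def]
  simp [hf.meromorphicOrderAt_eq, hf.analyticOrderAt_eq_zero.2 hz]

theorem divisor_le_divisor_of_subset (hf : AnalyticOnNhd 𝕜 f U) (hVU : V ⊆ U) (z : 𝕜) :
    divisor f V z ≤ divisor f U z := by
  by_cases hz : z ∈ V
  · rw [divisor_apply (hf.mono hVU).meromorphicOn hz, divisor_apply hf.meromorphicOn (hVU hz)]
  · rw [(divisor f V).apply_eq_zero_of_notMem hz]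
    exact hf.divisor_nonneg z

theorem finsum_divisor_add_divisor_le (hU : IsCompact U) (hf : AnalyticOnNhd 𝕜 f U) (hVU : V ⊆ U)
    (hz : z ∉ V) :
    (∑ᶠ u, divisor f V u) + divisor f U z ≤ ∑ᶠ u, divisor f U u := by
  classical
  have hV : (divisor f V).support.Finite :=
    hf.meromorphicOn.divisor_support_finite_of_subset hU hVU
  let mass : 𝕜 → ℤ := Pi.single z (divisor f U z)
  have hmass : mass.support.Finite := (Set.finite_singleton z).subset Pi.support_single_subset
  calc (∑ᶠ u, divisor f V u) + divisor f U z
      = ∑ᶠ u, (divisor f V u + mass u) := by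
        rw [finsum_add_distrib hV hmass, finsum_eq_single mass z fun u hu ↦ Pi.single_eq_of_ne hu _]
        simp only [mass, Pi.single_eq_same]
    _ ≤ ∑ᶠ u, divisor f U u := by
        refine finsum_le_finsum' ((hV.union hmass).subset (Function.support_add _ _))
          ((divisor f U).finiteSupport hU) fun u ↦ ?_
        rcases eq_or_ne u z with rfl | hu
        · simp [mass, hz]
        · simpa [mass, hu] using divisor_le_divisor_of_subset hf hVU u

theorem two_le_divisor [CompleteSpace E] [CharZero 𝕜] (hf : AnalyticOnNhd 𝕜 f U) (hzU : z ∈ U)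
    (htop : analyticOrderAt f z ≠ ⊤) (hz : f z = 0) (hz' : deriv f z = 0) :
    2 ≤ divisor f U z := by
  obtain ⟨n, hn⟩ := ENat.ne_top_iff_exists.1 htop
  have htwo : ((2 : ℕ) : ℕ∞) ≤ analyticOrderAt f z :=
    (natCast_le_analyticOrderAt_iff_iteratedDeriv_eq_zero (hf z hzU)).2 fun i hi ↦ by
      interval_cases i <;> simpa
  rw [← hn] at htwo
  rw [AnalyticOnNhd.divisor_apply hf hzU, ← hn]
  simpa using Nat.cast_le.1 htwo

end Divisor

section LogDeriv

variable {𝕜 : Type*} [NontriviallyNormedField 𝕜] {s : Finset 𝕜} {x : 𝕜} {g : 𝕜 → 𝕜} {U : Set 𝕜}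

theorem differentiableAt_prod_sub_zpow (d : 𝕜 → ℤ) (hx : x ∉ s) :
    DifferentiableAt 𝕜 (fun z ↦ ∏ u ∈ s, (z - u) ^ d u) x :=
  .fun_finsetProd fun _ hu ↦ .zpow (by fun_prop) <| .inl <|
    sub_ne_zero.2 (ne_of_mem_of_not_mem hu hx).symm

theorem prod_sub_zpow_ne_zero (d : 𝕜 → ℤ) (hx : x ∉ s) :
    ∏ u ∈ s, (x - u) ^ d u ≠ 0 :=
  Finset.prod_ne_zero_iff.2 fun _ hu ↦
    zpow_ne_zero _ (sub_ne_zero.2 (ne_of_mem_of_not_mem hu hx).symm)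

theorem logDeriv_prod_sub_zpow (d : 𝕜 → ℤ) (hx : x ∉ s) :
    logDeriv (fun z ↦ ∏ u ∈ s, (z - u) ^ d u) x = ∑ u ∈ s, d u * (x - u)⁻¹ := by
  have hne : ∀ u ∈ s, x - u ≠ 0 := fun u hu ↦ sub_ne_zero.2 (ne_of_mem_of_not_mem hu hx).symm
  have hdiff : ∀ u ∈ s, DifferentiableAt 𝕜 (fun z ↦ (z - u) ^ d u) x := fun u hu ↦
    (differentiableAt_id.sub_const u).zpow (.inl (hne u hu))
  rw [logDeriv_prod (f := fun u z ↦ (z - u) ^ d u) (fun u hu ↦ zpow_ne_zero _ (hne u hu)) hdiff]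
  refine Finset.sum_congr rfl fun u _ ↦ ?_
  rw [logDeriv_fun_zpow (by fun_prop), logDeriv_apply, deriv_sub_const, deriv_id'', one_div]

theorem analyticOnNhd_logDeriv [CompleteSpace 𝕜] (hg : AnalyticOnNhd 𝕜 g U)
    (hg0 : ∀ x ∈ U, g x ≠ 0) : AnalyticOnNhd 𝕜 (logDeriv g) U :=
  hg.deriv.div hg hg0

end LogDeriv

section ArgumentPrinciple

variable {f g : ℂ → ℂ} {c : ℂ} {R : ℝ}

theorem exists_eventuallyEq_prod_sub_zpow_mul (hR : 0 < R)
    (hf : MeromorphicOn f (closedBall c R)) (hfs : AnalyticOnNhd ℂ f (sphere c R))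
    (hf0 : ∀ x ∈ sphere c R, f x ≠ 0) {s : Finset ℂ}
    (hs : ↑s = (divisor f (closedBall c R)).support) :
    ∃ g : ℂ → ℂ, AnalyticOnNhd ℂ g (closedBall c R) ∧ (∀ x ∈ closedBall c R, g x ≠ 0) ∧
      ∀ x ∈ sphere c R,
        f =ᶠ[𝓝 x] fun z ↦ (∏ u ∈ s, (z - u) ^ divisor f (closedBall c R) u) * g z := by
  set D := divisor f (closedBall c R)
  have horder : ∀ u : closedBall c R, meromorphicOrderAt f u ≠ ⊤ := by
    obtain ⟨x, hx⟩ := NormedSpace.sphere_nonempty (x := c).2 hR.le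
    refine (hf.exists_meromorphicOrderAt_ne_top_iff_forall (isConnected_closedBall hR.le)).1
      ⟨⟨x, sphere_subset_closedBall hx⟩, ?_⟩
    simp [(hfs x hx).meromorphicOrderAt_eq, (hfs x hx).analyticOrderAt_eq_zero.2 (hf0 x hx)]
  obtain ⟨g, hg, hg0, hfg⟩ := hf.extract_zeros_poles horder (hs ▸ s.finite_toSet)
  have hprod : (∏ᶠ u, (· - u) ^ D u) = fun z ↦ ∏ u ∈ s, (z - u) ^ D u := by
    rw [finprod_eq_prod_of_mulSupport_subset (s := s) _
      (by rw [Function.FactorizedRational.mulSupport, hs])]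
    ext z
    simp
  rw [hprod] at hfg
  refine ⟨g, hg, fun x hx ↦ hg0 ⟨x, hx⟩, fun x hx ↦ ?_⟩
  have hxB := sphere_subset_closedBall hx
  have hDx : D x = 0 := divisor_eq_zero_of_analyticAt (hfs x hx) (hf0 x hx)
  have hrhs : AnalyticAt ℂ (fun z ↦ (∏ u ∈ s, (z - u) ^ D u) * g z) x :=
    (hprod ▸ Function.FactorizedRational.analyticAt hDx.ge).fun_mul (hg x hxB)
  have hacc : AccPt x (𝓟 (closedBall c R)) := by
    rw [← closure_ball c hR.ne']
    exact isOpen_ball.perfect_closure.2 _ (by rwa [closure_ball c hR.ne'])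
  rw [← (hfs x hx).continuousAt.eventuallyEq_nhds_iff_eventuallyEq_nhdsNE hrhs.continuousAt]
  exact (hfs x hx).meromorphicAt.eventuallyEq_nhdsNE_of_eventuallyEq_codiscreteWithin
    hrhs.meromorphicAt hxB hacc hfg

theorem exists_logDeriv_eq_sum_divisor_add_logDeriv (hR : 0 < R)
    (hf : MeromorphicOn f (closedBall c R)) (hfs : AnalyticOnNhd ℂ f (sphere c R))
    (hf0 : ∀ x ∈ sphere c R, f x ≠ 0) {s : Finset ℂ}
    (hs : ↑s = (divisor f (closedBall c R)).support) :
    ∃ g : ℂ → ℂ, AnalyticOnNhd ℂ g (closedBall c R) ∧ (∀ x ∈ closedBall c R, g x ≠ 0) ∧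
      ∀ x ∈ sphere c R, logDeriv f x =
        ∑ u ∈ s, divisor f (closedBall c R) u * (x - u)⁻¹ + logDeriv g x := by
  obtain ⟨g, hg, hg0, hfg⟩ := exists_eventuallyEq_prod_sub_zpow_mul hR hf hfs hf0 hs
  refine ⟨g, hg, hg0, fun x hx ↦ ?_⟩
  have hxB := sphere_subset_closedBall hx
  have hxs : x ∉ s := by
    simpa [← Finset.mem_coe, hs] using divisor_eq_zero_of_analyticAt (hfs x hx) (hf0 x hx)
  rw [(logDeriv_congr_nhds (hfg x hx)).eq_of_nhds,
    logDeriv_mul x (prod_sub_zpow_ne_zero _ hxs) (hg0 x hxB)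
      (differentiableAt_prod_sub_zpow _ hxs) (hg x hxB).differentiableAt,
    logDeriv_prod_sub_zpow _ hxs]

theorem circleIntegral_logDeriv_eq_zero_of_ne_zero (hR : 0 ≤ R)
    (hg : AnalyticOnNhd ℂ g (closedBall c R)) (hg0 : ∀ x ∈ closedBall c R, g x ≠ 0) :
    (∮ x in C(c, R), logDeriv g x) = 0 :=
  DiffContOnCl.circleIntegral_eq_zero hR
    ((analyticOnNhd_logDeriv hg hg0).differentiableOn.diffContOnCl_ball subset_rfl)

theorem circleIntegral_logDeriv_eq_finsum_divisor (hR : 0 < R)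
    (hf : MeromorphicOn f (closedBall c R)) (hfs : AnalyticOnNhd ℂ f (sphere c R))
    (hf0 : ∀ x ∈ sphere c R, f x ≠ 0) :
    (∮ x in C(c, R), logDeriv f x) = 2 * π * I * ↑(∑ᶠ u, divisor f (closedBall c R) u) := by
  set D := divisor f (closedBall c R)
  have hfin : D.support.Finite := D.finiteSupport (isCompact_closedBall c R)
  have hball : ∀ u ∈ hfin.toFinset, u ∈ ball c R := by
    intro u hu
    have hDu : D u ≠ 0 := by simpa using hu
    rw [← closedBall_sdiff_sphere]
    exact ⟨D.supportWithinDomain hDu,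
      fun hus ↦ hDu (divisor_eq_zero_of_analyticAt (hfs u hus) (hf0 u hus))⟩
  obtain ⟨g, hg, hg0, hfg⟩ :=
    exists_logDeriv_eq_sum_divisor_add_logDeriv hR hf hfs hf0 hfin.coe_toFinset
  have hint : ∀ u ∈ hfin.toFinset, CircleIntegrable (fun x ↦ D u * (x - u)⁻¹) c R := by
    intro u hu
    refine ContinuousOn.circleIntegrable hR.le (continuousOn_const.mul (.inv₀ (by fun_prop) ?_))
    rintro x hx h
    rw [sub_eq_zero.1 h] at hx
    exact (mem_ball.1 (hball u hu)).ne hx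
  have hintg : CircleIntegrable (logDeriv g) c R :=
    ((analyticOnNhd_logDeriv hg hg0).continuousOn.mono sphere_subset_closedBall).circleIntegrable
      hR.le
  calc (∮ x in C(c, R), logDeriv f x)
      = ∮ x in C(c, R), ∑ u ∈ hfin.toFinset, D u * (x - u)⁻¹ + logDeriv g x :=
        circleIntegral.integral_congr hR.le hfg
    _ = ∑ u ∈ hfin.toFinset, (D u * ∮ x in C(c, R), (x - u)⁻¹) := by
        rw [circleIntegral.integral_add (CircleIntegrable.fun_sum _ hint) hintg,
          circleIntegral_logDeriv_eq_zero_of_ne_zero hR.le hg hg0, add_zero,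
          circleIntegral.integral_fun_sum hint]
        simp only [circleIntegral.integral_const_mul]
    _ = ∑ u ∈ hfin.toFinset, D u * (2 * π * I) := Finset.sum_congr rfl fun u hu ↦ by
        rw [circleIntegral.integral_sub_inv_of_mem_ball (hball u hu)]
    _ = 2 * π * I * ↑(∑ᶠ u, D u) := by
        rw [finsum_eq_sum _ hfin, ← Finset.sum_mul, mul_comm]
        push_cast
        rfl

theorem circleIntegral_logDeriv_eq_zero_of_mapsTo_slitPlane (hR : 0 ≤ R)
    (hf : ∀ x ∈ sphere c R, DifferentiableAt ℂ f x) (hslit : Set.MapsTo f (sphere c R) slitPlane) :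
    (∮ x in C(c, R), logDeriv f x) = 0 :=
  circleIntegral.integral_eq_zero_of_hasDerivWithinAt hR fun x hx ↦
    ((hf x hx).hasDerivAt.clog (hslit hx)).hasDerivWithinAt

theorem circleIntegral_logDeriv_eq_of_norm_sub_lt (hR : 0 ≤ R)
    (hf : AnalyticOnNhd ℂ f (sphere c R)) (hg : AnalyticOnNhd ℂ g (sphere c R))
    (hfg : ∀ x ∈ sphere c R, ‖f x - g x‖ < ‖g x‖) :
    (∮ x in C(c, R), logDeriv f x) = ∮ x in C(c, R), logDeriv g x := by
  have hg0 : ∀ x ∈ sphere c R, g x ≠ 0 := fun x hx ↦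
    norm_pos_iff.1 ((norm_nonneg _).trans_lt (hfg x hx))
  have hf0 : ∀ x ∈ sphere c R, f x ≠ 0 := fun x hx h ↦ by simpa [h] using hfg x hx
  have hslit : Set.MapsTo (fun x ↦ f x / g x) (sphere c R) slitPlane := by
    intro x hx
    have hlt : ‖(f x - g x) / g x‖ < 1 := by
      rw [norm_div, div_lt_one (norm_pos_iff.2 (hg0 x hx))]
      exact hfg x hx
    have := mem_slitPlane_of_norm_lt_one hlt
    rwa [sub_div, div_self (hg0 x hx), add_sub_cancel] at this
  rw [← sub_eq_zero, ← circleIntegral.integral_sub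
    ((analyticOnNhd_logDeriv hf hf0).continuousOn.circleIntegrable hR)
    ((analyticOnNhd_logDeriv hg hg0).continuousOn.circleIntegrable hR),
    ← circleIntegral_logDeriv_eq_zero_of_mapsTo_slitPlane hR
    (fun x hx ↦ (hf x hx).differentiableAt.fun_div (hg x hx).differentiableAt (hg0 x hx)) hslit]
  exact circleIntegral.integral_congr hR fun x hx ↦ (logDeriv_div x (hf0 x hx) (hg0 x hx)
    (hf x hx).differentiableAt (hg x hx).differentiableAt).symm

theorem finsum_divisor_eq_of_norm_sub_monomial_lt (hR : 0 < R)
    (hf : MeromorphicOn f (closedBall c R)) (hfs : AnalyticOnNhd ℂ f (sphere c R)) {a : ℂ} {k : ℕ}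
    (hfa : ∀ x ∈ sphere c R, ‖f x - a * (x - c) ^ k‖ < ‖a * (x - c) ^ k‖) :
    ∑ᶠ u, divisor f (closedBall c R) u = k := by
  have hf0 : ∀ x ∈ sphere c R, f x ≠ 0 := fun x hx h ↦ by simpa [h] using hfa x hx
  have ha : a ≠ 0 := by
    rintro rfl
    obtain ⟨x, hx⟩ := NormedSpace.sphere_nonempty (x := c).2 hR.le
    simpa using (norm_nonneg _).trans_lt (hfa x hx)
  have hmon : ∀ x, logDeriv (fun x ↦ a * (x - c) ^ k) x = k * (x - c)⁻¹ := fun x ↦ by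
    rw [logDeriv_const_mul _ _ ha, logDeriv_fun_pow (by fun_prop), logDeriv_apply, deriv_sub_const,
      deriv_id'', one_div]
  have hcount : 2 * π * I * ↑(∑ᶠ u, divisor f (closedBall c R) u) = 2 * π * I * (k : ℂ) := by
    rw [← circleIntegral_logDeriv_eq_finsum_divisor hR hf hfs hf0,
      circleIntegral_logDeriv_eq_of_norm_sub_lt hR.le hfs (fun x _ ↦ by fun_prop) hfa]
    simp only [hmon, circleIntegral.integral_const_mul,
      circleIntegral.integral_sub_inv_of_mem_ball (mem_ball_self hR)]
    ring
  exact_mod_cast mul_left_cancel₀ two_pi_I_ne_zero hcount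

end ArgumentPrinciple

theorem deriv_ne_zero_of_finsum_divisor_closedBall_eq {f : ℂ → ℂ} (hf : Differentiable ℂ f) {c : ℂ}
    {R : ℕ → ℝ} (hR : Tendsto R atTop atTop)
    (hcount : ∀ k, ∑ᶠ u, divisor f (closedBall c (R k)) u = k) {z : ℂ} (hz : f z = 0) :
    deriv f z ≠ 0 := by
  intro hz'
  have hfan (U : Set ℂ) : AnalyticOnNhd ℂ f U := fun x _ ↦ hf.analyticAt x
  have htop : analyticOrderAt f z ≠ ⊤ := by
    intro htop
    have hzero : f = fun _ ↦ 0 :=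
      (hfan Set.univ).eq_of_eventuallyEq analyticOnNhd_const (analyticOrderAt_eq_top.1 htop)
    simpa [hzero] using hcount 1
  obtain ⟨k, hzk, hmin⟩ : ∃ k, z ∈ closedBall c (R k) ∧ ∀ m < k, z ∉ closedBall c (R m) := by
    classical
    have hex : ∃ k, z ∈ closedBall c (R k) := (hR.eventually_ge_atTop (dist z c)).exists
    exact ⟨Nat.find hex, Nat.find_spec hex, fun _ ↦ Nat.find_min hex⟩
  have hle {V : Set ℂ} (hV : V ⊆ closedBall c (R k)) (hzV : z ∉ V) :
      (∑ᶠ u, divisor f V u) + 2 ≤ k := calc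
    _ ≤ (∑ᶠ u, divisor f V u) + divisor f (closedBall c (R k)) z := by
      grw [two_le_divisor (hfan _) hzk htop hz hz']
    _ ≤ ∑ᶠ u, divisor f (closedBall c (R k)) u :=
      finsum_divisor_add_divisor_le (isCompact_closedBall c (R k)) (hfan _) hV hzV
    _ = k := hcount k
  rcases k with _ | m
  · have := hle (Set.empty_subset _) (Set.notMem_empty z)
    simp at this
  · have hzm : z ∉ closedBall c (R m) := hmin m m.lt_succ_self
    have hRm : R m ≤ R (m + 1) := ((not_le.1 hzm).trans_le hzk).le
    have := hle (closedBall_subset_closedBall hRm) hzm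
    rw [hcount] at this
    omega

theorem norm_tsum_sub_apply_lt {E : Type*} [NormedAddCommGroup E] [CompleteSpace E] {w : ℕ → E}
    {b : ℕ → ℝ} (hb : Summable b) (hb0 : ∀ j, 0 < b j) (k : ℕ)
    (hleft : ∀ i j, i + j + 1 = k → ‖w i‖ ≤ b j) (hright : ∀ j, ‖w (j + (k + 1))‖ ≤ b j) :
    ‖∑' i, w i - w k‖ < 2 * ∑' j, b j := by
  have hw : Summable w := (summable_nat_add_iff (k + 1)).1 (.of_norm_bounded hb hright)
  have hhead : ‖∑ i ∈ Finset.range k, w i‖ < ∑' j, b j := calc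
    ‖∑ i ∈ Finset.range k, w i‖ = ‖∑ j ∈ Finset.range k, w (k - 1 - j)‖ := by
      rw [Finset.sum_range_reflect]
    _ ≤ ∑ j ∈ Finset.range k, b j :=
      norm_sum_le_of_le _ fun j hj ↦ hleft _ _ (by have := Finset.mem_range.1 hj; omega)
    _ < ∑ j ∈ Finset.range (k + 1), b j := by
      rw [Finset.sum_range_succ]
      exact lt_add_of_pos_right _ (hb0 k)
    _ ≤ ∑' j, b j := hb.sum_le_tsum _ fun j _ ↦ (hb0 j).le
  have htail : ‖∑' j, w (j + (k + 1))‖ ≤ ∑' j, b j := tsum_of_norm_bounded hb.hasSum hright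
  have hsplit : ∑' i, w i - w k = ∑ i ∈ Finset.range k, w i + ∑' j, w (j + (k + 1)) := by
    rw [← hw.sum_add_tsum_nat_add (k + 1), Finset.sum_range_succ]
    abel
  rw [hsplit, two_mul]
  exact (norm_add_le _ _).trans_lt (add_lt_add_of_lt_of_le hhead htail)

section PartialTheta

theorem cast_triangle {K : Type*} [Field K] [CharZero K] (j : ℕ) :
    ((j * (j + 1) / 2 : ℕ) : K) = j * (j + 1) / 2 := by
  rw [Nat.cast_div (even_iff_two_dvd.1 (Nat.even_mul_succ_self j)) (by norm_num)]
  push_cast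
  rfl

section NormedField

variable {𝕜 : Type*} [NormedField 𝕜] {q x : 𝕜} {k : ℕ}

theorem summable_pow_triangle_mul_pow [CompleteSpace 𝕜] (hq : ‖q‖ < 1) (x : 𝕜) :
    Summable fun j : ℕ ↦ q ^ (j * (j + 1) / 2) * x ^ j := by
  have hlim : Tendsto (fun j : ℕ ↦ ‖q‖ ^ (j + 1) * ‖x‖) atTop (𝓝 0) := by
    simpa using ((tendsto_pow_atTop_nhds_zero_of_lt_one (norm_nonneg q) hq).comp
      (tendsto_add_atTop_nat 1)).mul_const ‖x‖
  refine summable_of_ratio_norm_eventually_le one_half_lt_one ?_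
  filter_upwards [hlim.eventually_le_const one_half_pos] with j hj
  have hsucc : (j + 1) * (j + 1 + 1) / 2 = j * (j + 1) / 2 + (j + 1) := by
    simpa [mul_comm] using Nat.triangle_succ (j + 1)
  calc ‖q ^ ((j + 1) * (j + 1 + 1) / 2) * x ^ (j + 1)‖
      = ‖q‖ ^ (j + 1) * ‖x‖ * ‖q ^ (j * (j + 1) / 2) * x ^ j‖ := by
        rw [hsucc, pow_add, pow_succ x]
        simp only [norm_mul, norm_pow]
        ring
    _ ≤ 1 / 2 * ‖q ^ (j * (j + 1) / 2) * x ^ j‖ := by gcongr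

theorem norm_pow_triangle_mul_pow_of_norm_eq (hq : 0 < ‖q‖)
    (hx : ‖x‖ = ‖q‖ ^ (-((k : ℝ) + 1 / 2))) (j : ℕ) :
    ‖q ^ (j * (j + 1) / 2) * x ^ j‖ = ‖q‖ ^ (-(k : ℝ) ^ 2 / 2) * ‖q‖ ^ (((j : ℝ) - k) ^ 2 / 2) := by
  rw [norm_mul, norm_pow, norm_pow, hx, ← Real.rpow_natCast, ← Real.rpow_natCast,
    ← Real.rpow_mul hq.le, ← Real.rpow_add hq, ← Real.rpow_add hq, cast_triangle]
  ring_nf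

end NormedField

theorem summable_rpow_succ_sq_div_two {t : ℝ} (ht0 : 0 < t) (ht1 : t < 1) :
    Summable fun j : ℕ ↦ t ^ (((j : ℝ) + 1) ^ 2 / 2) := by
  refine .of_nonneg_of_le (fun j ↦ by positivity) (fun j ↦ ?_)
    (summable_geometric_of_lt_one ht0.le ht1)
  rw [← Real.rpow_natCast t j]
  exact Real.rpow_le_rpow_of_exponent_ge ht0 ht1.le (by nlinarith)

/-- The partial theta function `θ(q, x) = ∑ q^(j(j+1)/2) x^j` as a function of `x`, for a fixed
parameter `q`. The natural-number division in the exponent is exact, as `j(j+1)` is even; the series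
converges for all `x` when `‖q‖ < 1`. -/
noncomputable def partialTheta (q x : ℂ) : ℂ :=
  ∑' j : ℕ, q ^ (j * (j + 1) / 2) * x ^ j

variable {q : ℂ}

theorem differentiable_partialTheta (hq : ‖q‖ < 1) : Differentiable ℂ (partialTheta q) := by
  intro x
  have hsum : Summable fun j : ℕ ↦ ‖q‖ ^ (j * (j + 1) / 2) * (‖x‖ + 1) ^ j :=
    summable_pow_triangle_mul_pow (by rwa [norm_norm]) _
  have hball : DifferentiableOn ℂ (partialTheta q) (ball 0 (‖x‖ + 1)) := by
    refine differentiableOn_tsum_of_summable_norm hsum (fun j ↦ by fun_prop) isOpen_ball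
      fun j w hw ↦ ?_
    rw [norm_mul, norm_pow, norm_pow]
    gcongr
    exact (mem_ball_zero_iff.1 hw).le
  exact hball.differentiableAt (isOpen_ball.mem_nhds (by simp))

theorem norm_partialTheta_sub_lt (hq0 : 0 < ‖q‖) (hq1 : ‖q‖ < 1)
    (hsum : 2 * ∑' j : ℕ, ‖q‖ ^ (((j : ℝ) + 1) ^ 2 / 2) ≤ 1) {k : ℕ} {x : ℂ}
    (hx : ‖x‖ = ‖q‖ ^ (-((k : ℝ) + 1 / 2))) :
    ‖partialTheta q x - q ^ (k * (k + 1) / 2) * x ^ k‖ < ‖q ^ (k * (k + 1) / 2) * x ^ k‖ := by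
  have hnorm := norm_pow_triangle_mul_pow_of_norm_eq hq0 hx
  set M := ‖q‖ ^ (-(k : ℝ) ^ 2 / 2)
  have hM : ‖q ^ (k * (k + 1) / 2) * x ^ k‖ = M := by rw [hnorm]; simp
  calc ‖partialTheta q x - q ^ (k * (k + 1) / 2) * x ^ k‖
      < 2 * ∑' j : ℕ, M * ‖q‖ ^ (((j : ℝ) + 1) ^ 2 / 2) := by
        refine norm_tsum_sub_apply_lt (w := fun j ↦ q ^ (j * (j + 1) / 2) * x ^ j)
          ((summable_rpow_succ_sq_div_two hq0 hq1).mul_left M) (fun j ↦ by positivity) k ?_ ?_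
        · rintro i j rfl
          have hsq : ((i : ℝ) - (i + j + 1 : ℕ)) ^ 2 = ((j : ℝ) + 1) ^ 2 := by push_cast; ring
          rw [hnorm, hsq]
        · intro j
          have hsq : (((j + (k + 1) : ℕ) : ℝ) - k) ^ 2 = ((j : ℝ) + 1) ^ 2 := by push_cast; ring
          rw [hnorm, hsq]
    _ = M * (2 * ∑' j : ℕ, ‖q‖ ^ (((j : ℝ) + 1) ^ 2 / 2)) := by rw [tsum_mul_left]; ring
    _ ≤ ‖q ^ (k * (k + 1) / 2) * x ^ k‖ := by
        rw [hM]
        exact mul_le_of_le_one_right (by positivity) hsum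

theorem finsum_divisor_partialTheta_closedBall (hq0 : 0 < ‖q‖) (hq1 : ‖q‖ < 1)
    (hsum : 2 * ∑' j : ℕ, ‖q‖ ^ (((j : ℝ) + 1) ^ 2 / 2) ≤ 1) (k : ℕ) :
    ∑ᶠ u, divisor (partialTheta q) (closedBall 0 (‖q‖ ^ (-((k : ℝ) + 1 / 2)))) u = k := by
  have han (U : Set ℂ) : AnalyticOnNhd ℂ (partialTheta q) U :=
    fun x _ ↦ (differentiable_partialTheta hq1).analyticAt x
  refine finsum_divisor_eq_of_norm_sub_monomial_lt (a := q ^ (k * (k + 1) / 2)) (by positivity)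
    (han _).meromorphicOn (han _) fun x hx ↦ ?_
  rw [sub_zero]
  exact norm_partialTheta_sub_lt hq0 hq1 hsum (mem_sphere_zero_iff_norm.1 hx)

theorem tendsto_rpow_neg_add_half_atTop {t : ℝ} (ht0 : 0 < t) (ht1 : t < 1) :
    Tendsto (fun k : ℕ ↦ t ^ (-((k : ℝ) + 1 / 2))) atTop atTop :=
  (tendsto_rpow_atBot_of_base_lt_one t ht0 ht1).comp <| tendsto_neg_atTop_atBot.comp <|
    tendsto_atTop_add_const_right _ _ tendsto_natCast_atTop_atTop

end PartialTheta

/-- If `2 ∑_{ν=1}^∞ |q|^{ν²/2} ≤ 1` then the partial theta function `θ(q,·)` has no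
multiple zeros. -/
theorem partialTheta_no_multiple_zero_of_small_q (q : ℂ) (hq0 : 0 < ‖q‖) (hq1 : ‖q‖ < 1)
    (hsum : 2 * ∑' ν : ℕ, ‖q‖ ^ ((((ν : ℝ) + 1) ^ 2) / 2) ≤ 1) :
    ¬ ∃ ζ : ℂ, (∑' j : ℕ, q ^ (j * (j + 1) / 2) * ζ ^ j = 0) ∧
      deriv (fun x : ℂ => ∑' j : ℕ, q ^ (j * (j + 1) / 2) * x ^ j) ζ = 0 := by
  rintro ⟨ζ, hζ, hζ'⟩
  exact deriv_ne_zero_of_finsum_divisor_closedBall_eq (differentiable_partialTheta hq1)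
    (tendsto_rpow_neg_add_half_atTop hq0 hq1)
    (finsum_divisor_partialTheta_closedBall hq0 hq1 hsum) hζ hζ'
end

section
/- Let q ∈ ℂ with 0 < |q| < 1 satisfy 2 Σ_{ν=1}^∞ |q|^{ν²/2} ≤ 1, and let k ∈ ℕ, k ≥ 1. Then for every x ∈ ℂ with |x| = |q|^{-k-1/2}, the term of index k dominates the rest of the series: |x^k q^{k(k+1)/2}| > Σ_{j ≥ 0, j ≠ k} |q^{j(j+1)/2} x^j|. In particular θ(q,x) ≠ 0 for every x with |x| = |q|^{-k-1/2}. -/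
/-!
On the circle `|x| = |q|^(-k - 1/2)`, completing the square shows that the `j`-th term of the series
has modulus `C * |q|^((j - k)² / 2)`, where `C = |q|^(-k² / 2)` is the modulus of the `k`-th term.
The terms with `j ≠ k` thus contribute `C` times a Gaussian sum over the integers `-k, -k + 1, …`
without `0`. That sum misses some nonzero integers, so it is strictly below the sum over all of
them, which is at most `1` by hypothesis.
-/

open Filter Topology

section InfiniteSums

theorem add_tsum_subtype_ne {G : Type*} [AddCommGroup G] [TopologicalSpace G]
    [IsTopologicalAddGroup G] [T2Space G] {ι : Type*} {f : ι → G} (hf : Summable f) (i : ι) :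
    f i + ∑' j : {j // j ≠ i}, f j = ∑' j, f j := by
  rw [← hf.sum_add_tsum_compl (s := {i}), Finset.sum_singleton, Finset.coe_singleton]
  rfl

theorem tsum_ne_zero_of_tsum_subtype_ne_norm_lt {E : Type*} [NormedAddCommGroup E] [CompleteSpace E]
    {ι : Type*} {f : ι → E} (hf : Summable fun j => ‖f j‖) {i : ι}
    (hi : ∑' j : {j // j ≠ i}, ‖f j‖ < ‖f i‖) : ∑' j, f j ≠ 0 := by
  intro hzero
  rw [← add_tsum_subtype_ne hf.of_norm i] at hzero
  refine hi.not_ge ?_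
  calc ‖f i‖ = ‖∑' j : {j // j ≠ i}, f j‖ := by rw [eq_neg_of_add_eq_zero_left hzero, norm_neg]
    _ ≤ ∑' j : {j // j ≠ i}, ‖f j‖ := norm_tsum_le_tsum_norm (hf.subtype _)

theorem tsum_subtype_ne_eq_sum_range_add_tsum {G : Type*} [AddCommGroup G] [TopologicalSpace G]
    [IsTopologicalAddGroup G] [T2Space G] {f : ℕ → G} (hf : Summable f) (k : ℕ) :
    ∑' j : {j // j ≠ k}, f j = ∑ j ∈ Finset.range k, f j + ∑' i, f (i + (k + 1)) := by
  have hsplit := hf.sum_add_tsum_nat_add (k + 1)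
  rw [← add_tsum_subtype_ne hf k, Finset.sum_range_succ, add_right_comm, add_comm _ (f k)] at hsplit
  exact (add_left_cancel hsplit).symm

theorem sum_range_lt_tsum_of_pos {a : ℕ → ℝ} (ha : Summable a) (hpos : ∀ i, 0 < a i) (n : ℕ) :
    ∑ i ∈ Finset.range n, a i < ∑' i, a i := by
  have htail : 0 < ∑' i, a (i + n) :=
    ((summable_nat_add_iff n).2 ha).tsum_pos (fun _ => (hpos _).le) 0 (hpos _)
  linarith [ha.sum_add_tsum_nat_add n]

theorem sum_range_sub_eq_sum_range_succ_of_even {M : Type*} [AddCommMonoid M] {g : ℤ → M}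
    (hg : g.Even) (k : ℕ) :
    ∑ j ∈ Finset.range k, g (j - k) = ∑ i ∈ Finset.range k, g (i + 1) := by
  rw [← Finset.sum_range_reflect]
  refine Finset.sum_congr rfl fun i hi => ?_
  have hik : i < k := Finset.mem_range.1 hi
  rw [← hg]
  congr 1
  omega

theorem tsum_subtype_ne_sub_lt_two_mul_tsum_of_even {g : ℤ → ℝ} (hg : g.Even) (hpos : ∀ n, 0 < g n)
    (hsum : Summable fun i : ℕ => g (i + 1)) (k : ℕ) :
    ∑' j : {j : ℕ // j ≠ k}, g ((j : ℕ) - k) < 2 * ∑' i : ℕ, g (i + 1) := by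
  have hshift : ∀ i : ℕ, g ((i + (k + 1) : ℕ) - k) = g (i + 1) := fun i => by
    congr 1
    omega
  have hsum_sub : Summable fun j : ℕ => g (j - k) := by
    rw [← summable_nat_add_iff (k + 1)]
    simpa only [hshift] using hsum
  calc ∑' j : {j : ℕ // j ≠ k}, g ((j : ℕ) - k)
      = ∑ i ∈ Finset.range k, g (i + 1) + ∑' i : ℕ, g (i + 1) := by
        rw [tsum_subtype_ne_eq_sum_range_add_tsum hsum_sub,
          sum_range_sub_eq_sum_range_succ_of_even hg]
        simp only [hshift]
    _ < ∑' i : ℕ, g (i + 1) + ∑' i : ℕ, g (i + 1) := by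
        gcongr
        exact sum_range_lt_tsum_of_pos hsum (fun _ => hpos _) k
    _ = 2 * ∑' i : ℕ, g (i + 1) := (two_mul _).symm

end InfiniteSums

section GaussianSums

variable {r : ℝ}

theorem summable_rpow_sq_div_two (h0 : 0 ≤ r) (h1 : r < 1) :
    Summable fun n : ℕ => r ^ ((n : ℝ) ^ 2 / 2) := by
  have hgeom : Summable fun n : ℕ => √r ^ n :=
    summable_geometric_of_lt_one (Real.sqrt_nonneg r) (by rwa [Real.sqrt_lt' one_pos, one_pow])
  refine (hgeom.comp_injective (Nat.pow_left_injective two_ne_zero)).congr fun n => ?_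
  rw [Function.comp_apply, Real.sqrt_eq_rpow, ← Real.rpow_mul_natCast h0]
  congr 1
  push_cast
  ring

theorem tsum_subtype_ne_rpow_sub_sq_div_two_lt (h0 : 0 < r) (h1 : r < 1) (k : ℕ) :
    ∑' j : {j : ℕ // j ≠ k}, r ^ (((j : ℕ) - k : ℝ) ^ 2 / 2) <
      2 * ∑' ν : ℕ, r ^ (((ν : ℝ) + 1) ^ 2 / 2) := by
  have heven : Function.Even fun n : ℤ => r ^ ((n : ℝ) ^ 2 / 2) := fun n => by
    simp only [Int.cast_neg, neg_sq]
  have hsum : Summable fun ν : ℕ => r ^ (((ν : ℝ) + 1) ^ 2 / 2) := by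
    simpa only [Nat.cast_succ] using
      (summable_nat_add_iff 1).2 (summable_rpow_sq_div_two h0.le h1)
  simpa using tsum_subtype_ne_sub_lt_two_mul_tsum_of_even heven (fun _ => Real.rpow_pos_of_pos h0 _)
    (by simpa using hsum) k

end GaussianSums

/-- The `j`-th term `q^(j(j+1)/2) x^j` of the partial theta series `θ(q, x)`. The exponent is a
natural number quotient, which is exact because `j(j+1)` is even. -/
def partialThetaTerm {M : Type*} [Monoid M] (q x : M) (j : ℕ) : M :=
  q ^ (j * (j + 1) / 2) * x ^ j

section PartialTheta

variable {𝕜 : Type*} [NormedDivisionRing 𝕜] {q x : 𝕜}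

theorem norm_partialThetaTerm_succ (q x : 𝕜) (j : ℕ) :
    ‖partialThetaTerm q x (j + 1)‖ = ‖q‖ ^ (j + 1) * ‖x‖ * ‖partialThetaTerm q x j‖ := by
  have hexp : (j + 1) * (j + 1 + 1) / 2 = j * (j + 1) / 2 + (j + 1) := by
    simpa only [Nat.add_sub_cancel, mul_comm] using Nat.triangle_succ (j + 1)
  simp only [partialThetaTerm, norm_mul, norm_pow, hexp]
  ring

theorem summable_norm_partialThetaTerm (hq : ‖q‖ < 1) (x : 𝕜) :
    Summable fun j => ‖partialThetaTerm q x j‖ := by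
  have hratio : Tendsto (fun j : ℕ => ‖q‖ ^ (j + 1) * ‖x‖) atTop (𝓝 0) := by
    simpa only [zero_mul] using ((tendsto_add_atTop_iff_nat 1).2
      (tendsto_pow_atTop_nhds_zero_of_lt_one (norm_nonneg q) hq)).mul_const ‖x‖
  refine summable_of_ratio_norm_eventually_le one_half_lt_one ?_
  filter_upwards [hratio.eventually_le_const one_half_pos] with j hj
  rw [norm_norm, norm_norm, norm_partialThetaTerm_succ]
  gcongr

theorem norm_partialThetaTerm_of_norm_eq_rpow (hq : 0 < ‖q‖) {s : ℝ}
    (hx : ‖x‖ = ‖q‖ ^ (-s - 1 / 2)) (j : ℕ) :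
    ‖partialThetaTerm q x j‖ = ‖q‖ ^ (-s ^ 2 / 2) * ‖q‖ ^ ((j - s) ^ 2 / 2) := by
  have htri : ((j * (j + 1) / 2 : ℕ) : ℝ) = j * (j + 1) / 2 := by
    rw [Nat.cast_div (Nat.even_mul_succ_self j).two_dvd (Nat.cast_ne_zero.2 two_ne_zero)]
    norm_cast
  calc ‖partialThetaTerm q x j‖ = ‖q‖ ^ ((j * (j + 1) / 2 : ℝ) + (-s - 1 / 2) * j) := by
        rw [partialThetaTerm, norm_mul, norm_pow, norm_pow, hx, ← Real.rpow_natCast, htri,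
          ← Real.rpow_mul_natCast hq.le, ← Real.rpow_add hq]
    _ = ‖q‖ ^ (-s ^ 2 / 2 + (j - s) ^ 2 / 2) := by ring_nf
    _ = ‖q‖ ^ (-s ^ 2 / 2) * ‖q‖ ^ ((j - s) ^ 2 / 2) := Real.rpow_add hq _ _

theorem tsum_subtype_ne_norm_partialThetaTerm_lt (hq0 : 0 < ‖q‖) (hq1 : ‖q‖ < 1)
    (hsum : 2 * ∑' ν : ℕ, ‖q‖ ^ (((ν : ℝ) + 1) ^ 2 / 2) ≤ 1) {k : ℕ}
    (hx : ‖x‖ = ‖q‖ ^ (-(k : ℝ) - 1 / 2)) :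
    ∑' j : {j // j ≠ k}, ‖partialThetaTerm q x j‖ < ‖partialThetaTerm q x k‖ := by
  have hterm := norm_partialThetaTerm_of_norm_eq_rpow hq0 hx
  calc ∑' j : {j // j ≠ k}, ‖partialThetaTerm q x j‖
      = ‖q‖ ^ (-(k : ℝ) ^ 2 / 2) *
          ∑' j : {j : ℕ // j ≠ k}, ‖q‖ ^ (((j : ℕ) - k : ℝ) ^ 2 / 2) := by
        simp only [hterm, tsum_mul_left]
    _ < ‖q‖ ^ (-(k : ℝ) ^ 2 / 2) * 1 := by
        gcongr
        exact (tsum_subtype_ne_rpow_sub_sq_div_two_lt hq0 hq1 k).trans_le hsum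
    _ = ‖partialThetaTerm q x k‖ := by simp [hterm]

theorem partialTheta_dominant_term_general [CompleteSpace 𝕜] (hq0 : 0 < ‖q‖) (hq1 : ‖q‖ < 1)
    (hsum : 2 * ∑' ν : ℕ, ‖q‖ ^ (((ν : ℝ) + 1) ^ 2 / 2) ≤ 1) {k : ℕ}
    (hx : ‖x‖ = ‖q‖ ^ (-(k : ℝ) - 1 / 2)) :
    ∑' j : {j // j ≠ k}, ‖partialThetaTerm q x j‖ < ‖partialThetaTerm q x k‖ ∧
      ∑' j, partialThetaTerm q x j ≠ 0 :=
  have hdom := tsum_subtype_ne_norm_partialThetaTerm_lt hq0 hq1 hsum hx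
  ⟨hdom, tsum_ne_zero_of_tsum_subtype_ne_norm_lt (summable_norm_partialThetaTerm hq1 x) hdom⟩

end PartialTheta

/-- If `2 ∑_{ν=1}^∞ |q|^{ν²/2} ≤ 1` and `|x| = |q|^{-k-1/2}` for `k ≥ 1`, then the `k`-th term
of the partial theta series dominates the sum of the moduli of all the other terms; in
particular `θ(q,x) ≠ 0`. -/
theorem partialTheta_dominant_term (q : ℂ) (hq0 : 0 < ‖q‖) (hq1 : ‖q‖ < 1)
    (hsum : 2 * ∑' ν : ℕ, ‖q‖ ^ ((((ν : ℝ) + 1) ^ 2) / 2) ≤ 1)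
    (k : ℕ) (hk : 1 ≤ k) (x : ℂ) (hx : ‖x‖ = ‖q‖ ^ (-(k : ℝ) - 1/2)) :
    (∑' j : {j : ℕ // j ≠ k}, ‖q ^ ((j : ℕ) * ((j : ℕ) + 1) / 2) * x ^ (j : ℕ)‖)
        < ‖x ^ k * q ^ (k * (k + 1) / 2)‖ ∧
      ∑' j : ℕ, q ^ (j * (j + 1) / 2) * x ^ j ≠ 0 := by
  rw [mul_comm (x ^ k)]
  exact partialTheta_dominant_term_general hq0 hq1 hsum hx
end

section
/- Suppose b > 1 and q ∈ ℂ with 0 < |q| ≤ 1 - 1/b. Then the infinite product Q := Π_{m=1}^∞ (1 - q^m) satisfies |Q| ≥ e^{(π²/6)(1-b)}. -/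
/-!
Each factor satisfies `‖(1 - x) * y‖ ≥ (1 - ‖x‖) * ‖y‖`, so with `r = ‖q‖` it is enough to bound
`-∑ₘ log (1 - rᵐ) = ∑ₖ (1 / k) * ∑ₘ rᵏᵐ` from above. The inner geometric series is at most
`rᵏ / (1 - rᵏ)`, and `1 - rᵏ = (1 - r) * (1 + r + ⋯ + rᵏ⁻¹) ≥ (1 - r) * k * rᵏ⁻¹` bounds this by
`(r / (1 - r)) / k`. Summing over `k` gives `(π² / 6) * (r / (1 - r))`, and
`r / (1 - r) ≤ b - 1` exactly when `r ≤ 1 - 1 / b`.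
-/

open Finset Real

theorem succ_mul_pow_le_geom_sum {S : Type*} [Semiring S] [PartialOrder S] [IsOrderedRing S]
    {r : S} (h0 : 0 ≤ r) (h1 : r ≤ 1) (k : ℕ) : (k + 1) * r ^ k ≤ ∑ i ∈ range (k + 1), r ^ i := by
  have h_term : ∀ i ∈ range (k + 1), r ^ k ≤ r ^ i := fun i hi ↦
    pow_le_pow_of_le_one h0 h1 (mem_range_succ_iff.mp hi)
  simpa using card_nsmul_le_sum _ _ _ h_term

section OrderedField

variable {K : Type*} [Field K] [LinearOrder K] [IsStrictOrderedRing K] {r b : K}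

theorem pow_succ_div_one_sub_pow_succ_le (h0 : 0 ≤ r) (h1 : r < 1) (k : ℕ) :
    r ^ (k + 1) / (1 - r ^ (k + 1)) ≤ r / (1 - r) / (k + 1) := by
  have h_one_sub : 0 < 1 - r := sub_pos.mpr h1
  have h_one_sub_pow : 0 < 1 - r ^ (k + 1) := sub_pos.mpr (pow_lt_one₀ h0 h1 k.succ_ne_zero)
  rw [div_div, div_le_div_iff₀ h_one_sub_pow (mul_pos h_one_sub k.cast_add_one_pos)]
  calc
    r ^ (k + 1) * ((1 - r) * (k + 1)) = r * ((1 - r) * ((k + 1) * r ^ k)) := by ring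
    _ ≤ r * ((1 - r) * ∑ i ∈ range (k + 1), r ^ i) := by
      gcongr
      exact succ_mul_pow_le_geom_sum h0 h1.le k
    _ = r * (1 - r ^ (k + 1)) := by rw [mul_neg_geom_sum]

theorem sum_range_pow_succ_le_div_one_sub (h0 : 0 ≤ r) (h1 : r < 1) (n : ℕ) :
    ∑ m ∈ range n, r ^ (m + 1) ≤ r / (1 - r) := by
  simpa [sum_Ico_eq_sum_range, add_comm] using
    geom_sum_Ico_le_of_lt_one (m := 1) (n := n + 1) h0 h1

theorem div_one_sub_le_sub_one (hb : 0 < b) (hr : r ≤ 1 - 1 / b) : r / (1 - r) ≤ b - 1 := by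
  have h_inv : 1 / b ≤ 1 - r := le_sub_comm.mp hr
  have h_one_sub : 0 < 1 - r := (one_div_pos.mpr hb).trans_le h_inv
  calc
    r / (1 - r) = 1 / (1 - r) - 1 := by field_simp; ring
    _ ≤ b - 1 := sub_le_sub_right ((one_div_le hb h_one_sub).mp h_inv) 1

end OrderedField

section RealProduct

variable {r : ℝ}

theorem hasSum_one_div_succ_sq : HasSum (fun k : ℕ ↦ 1 / ((k : ℝ) + 1) ^ 2) (π ^ 2 / 6) := by
  simpa using (hasSum_nat_add_iff' 1).mpr hasSum_zeta_two

theorem sum_pow_succ_pow_div_succ_le (h0 : 0 ≤ r) (h1 : r < 1) (k n : ℕ) :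
    ∑ m ∈ range n, (r ^ (m + 1)) ^ (k + 1) / ((k : ℝ) + 1) ≤
      r / (1 - r) * (1 / ((k : ℝ) + 1) ^ 2) := by
  calc
    ∑ m ∈ range n, (r ^ (m + 1)) ^ (k + 1) / ((k : ℝ) + 1)
        = (∑ m ∈ range n, (r ^ (k + 1)) ^ (m + 1)) / (k + 1) := by
      simp only [sum_div, pow_right_comm]
    _ ≤ r ^ (k + 1) / (1 - r ^ (k + 1)) / (k + 1) := by
      gcongr
      exact sum_range_pow_succ_le_div_one_sub (pow_nonneg h0 _)
        (pow_lt_one₀ h0 h1 k.succ_ne_zero) n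
    _ ≤ r / (1 - r) / (k + 1) / (k + 1) := by
      gcongr ?_ / _
      exact pow_succ_div_one_sub_pow_succ_le h0 h1 k
    _ = r / (1 - r) * (1 / ((k : ℝ) + 1) ^ 2) := by rw [div_div, ← sq, mul_one_div]

theorem sum_neg_log_one_sub_pow_le (h0 : 0 ≤ r) (h1 : r < 1) (n : ℕ) :
    ∑ m ∈ range n, -log (1 - r ^ (m + 1)) ≤ r / (1 - r) * (π ^ 2 / 6) := by
  have h_log : HasSum (fun k : ℕ ↦ ∑ m ∈ range n, (r ^ (m + 1)) ^ (k + 1) / ((k : ℝ) + 1))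
      (∑ m ∈ range n, -log (1 - r ^ (m + 1))) := by
    refine hasSum_sum fun m _ ↦ hasSum_pow_div_log_of_abs_lt_one ?_
    rw [abs_of_nonneg (by positivity)]
    exact pow_lt_one₀ h0 h1 m.succ_ne_zero
  exact hasSum_le (fun k ↦ sum_pow_succ_pow_div_succ_le h0 h1 k n) h_log
    (hasSum_one_div_succ_sq.mul_left _)

theorem exp_le_prod_one_sub_pow (h0 : 0 ≤ r) (h1 : r < 1) (n : ℕ) :
    exp (-(π ^ 2 / 6 * (r / (1 - r)))) ≤ ∏ m ∈ range n, (1 - r ^ (m + 1)) := by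
  have h_pos (m : ℕ) : 0 < 1 - r ^ (m + 1) := sub_pos.mpr (pow_lt_one₀ h0 h1 m.succ_ne_zero)
  rw [← le_log_iff_exp_le (prod_pos fun m _ ↦ h_pos m), log_prod fun m _ ↦ (h_pos m).ne', neg_le,
    ← sum_neg_distrib, mul_comm]
  exact sum_neg_log_one_sub_pow_le h0 h1 n

end RealProduct

section NormedRing

variable {R : Type*}

theorem one_sub_norm_mul_norm_le [SeminormedRing R] (x y : R) :
    (1 - ‖x‖) * ‖y‖ ≤ ‖(1 - x) * y‖ := by
  rw [one_sub_mul, one_sub_mul]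
  linarith [norm_sub_norm_le y (x * y), norm_mul_le x y]

theorem prod_one_sub_norm_le_norm_prod_one_sub [SeminormedCommRing R] [NormOneClass R] {ι : Type*}
    (s : Finset ι) (f : ι → R) (hf : ∀ i ∈ s, ‖f i‖ ≤ 1) :
    ∏ i ∈ s, (1 - ‖f i‖) ≤ ‖∏ i ∈ s, (1 - f i)‖ := by
  induction s using Finset.cons_induction with
  | empty => simp
  | cons a s ha ih =>
    obtain ⟨hfa, hfs⟩ := forall_mem_cons ha _ |>.mp hf
    rw [prod_cons, prod_cons]
    calc
      (1 - ‖f a‖) * ∏ i ∈ s, (1 - ‖f i‖) ≤ (1 - ‖f a‖) * ‖∏ i ∈ s, (1 - f i)‖ :=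
        mul_le_mul_of_nonneg_left (ih hfs) (sub_nonneg.mpr hfa)
      _ ≤ ‖(1 - f a) * ∏ i ∈ s, (1 - f i)‖ := one_sub_norm_mul_norm_le _ _

theorem prod_one_sub_norm_pow_le [SeminormedCommRing R] [NormOneClass R] {q : R} (hq : ‖q‖ ≤ 1)
    (n : ℕ) : ∏ m ∈ range n, (1 - ‖q‖ ^ (m + 1)) ≤ ‖∏ m ∈ range n, (1 - q ^ (m + 1))‖ := by
  have h_pow_le_one (m : ℕ) : ‖q‖ ^ (m + 1) ≤ 1 := pow_le_one₀ (norm_nonneg q) hq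
  calc
    ∏ m ∈ range n, (1 - ‖q‖ ^ (m + 1)) ≤ ∏ m ∈ range n, (1 - ‖q ^ (m + 1)‖) :=
      prod_le_prod (fun m _ ↦ sub_nonneg.mpr (h_pow_le_one m))
        fun m _ ↦ sub_le_sub_left (norm_pow_le q (m + 1)) 1
    _ ≤ ‖∏ m ∈ range n, (1 - q ^ (m + 1))‖ :=
      prod_one_sub_norm_le_norm_prod_one_sub _ _ fun m _ ↦
        (norm_pow_le q (m + 1)).trans (h_pow_le_one m)

variable [NormedCommRing R] [NormOneClass R] [CompleteSpace R] {q : R}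

theorem multipliable_one_sub_pow_succ (hq : ‖q‖ < 1) :
    Multipliable fun m : ℕ ↦ 1 - q ^ (m + 1) := by
  have h_summable : Summable fun m : ℕ ↦ ‖-q ^ (m + 1)‖ := by
    simpa only [norm_neg] using
      (summable_nat_add_iff 1).mpr (summable_norm_geometric_of_norm_lt_one hq)
  simpa only [← sub_eq_add_neg] using multipliable_one_add_of_summable h_summable

theorem Q_lower_bound_general (hq : ‖q‖ < 1) :
    exp (-(π ^ 2 / 6 * (‖q‖ / (1 - ‖q‖)))) ≤ ‖∏' m : ℕ, (1 - q ^ (m + 1))‖ :=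
  ge_of_tendsto' (multipliable_one_sub_pow_succ hq).hasProd.tendsto_prod_nat.norm fun n ↦
    (exp_le_prod_one_sub_pow (norm_nonneg q) hq n).trans (prod_one_sub_norm_pow_le hq.le n)

end NormedRing

/-- For `b > 1` and `0 < |q| ≤ 1 - 1/b`, the product `Q = ∏_{m=1}^∞ (1 - q^m)` satisfies
`|Q| ≥ e^{(π²/6)(1-b)}`. -/
theorem Q_lower_bound (b : ℝ) (hb : 1 < b) (q : ℂ) (hq0 : 0 < ‖q‖) (hq : ‖q‖ ≤ 1 - 1 / b) :
    Real.exp ((Real.pi ^ 2 / 6) * (1 - b)) ≤ ‖∏' m : ℕ, (1 - q ^ (m + 1))‖ := by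
  have h_ratio : ‖q‖ / (1 - ‖q‖) ≤ b - 1 := div_one_sub_le_sub_one (by positivity) hq
  refine le_trans ?_ (Q_lower_bound_general (hq.trans_lt (sub_lt_self 1 (by positivity))))
  rw [← neg_sub b 1, mul_neg]
  gcongr
end

section
/- Let n ≥ 3 be an integer, let q ∈ ℂ with 1 - 1/(n-1) ≤ |q| ≤ 1 - 1/n, and let x ∈ ℂ with |x| > 8^11 be a point lying outside all open disks D(μ_i, 1/(2n)), i ∈ ℕ, i ≥ 1, where μ_i := -q^{-i}. Let κ be the least positive integer m with |x q^m| < 1. Then |x q^κ + 1| · |x q + 1| · |x q² + 1| ≥ (1 - |x|^{-1/2})² / (2n) and |x q^{κ-1} + 1| · |x q³ + 1| · |x q⁴ + 1| ≥ (1 - |x|^{-1/2})² / (2n). -/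
/-!
Minimality of `κ` gives `1 ≤ ‖x * q ^ (κ - 1)‖`, hence, as `1 / 2 ≤ ‖q‖`, also
`1 / 2 ≤ ‖x * q ^ κ‖`. For `m = κ` and `m = κ - 1` the identity
`‖x + y⁻¹‖ * ‖x * y‖ = ‖x‖ * ‖x * y + 1‖` with `y = q ^ m` then shows that `‖x * q ^ m + 1‖` is at
least the distance from `x` to `-q ^ (-m)` divided by `2 * ‖x‖`. The other two factors are each of
order `‖x‖`, so their product makes up for this loss.
-/

section NormedDivisionRing

variable {K : Type*} [NormedDivisionRing K] {q x : K}

theorem norm_add_inv_mul_norm_mul (x : K) {y : K} (hy : y ≠ 0) :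
    ‖x + y⁻¹‖ * ‖x * y‖ = ‖x‖ * ‖x * y + 1‖ := by
  have factor : (x + y⁻¹) * y = x * y + 1 := by rw [add_mul, inv_mul_cancel₀ hy]
  rw [← factor, norm_mul, norm_mul]
  ring

theorem norm_div_two_pow_sub_one_le (x : K) (hq : 1 / 2 ≤ ‖q‖) {i k : ℕ} (hik : i ≤ k) :
    ‖x‖ / 2 ^ k - 1 ≤ ‖x * q ^ i + 1‖ := by
  have half_pow_le : (1 / 2 : ℝ) ^ k ≤ ‖q‖ ^ i :=
    calc (1 / 2 : ℝ) ^ k ≤ (1 / 2) ^ i := pow_le_pow_of_le_one (by norm_num) (by norm_num) hik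
      _ ≤ ‖q‖ ^ i := by gcongr
  calc ‖x‖ / 2 ^ k - 1 = ‖x‖ * (1 / 2) ^ k - 1 := by rw [one_div_pow, mul_one_div]
    _ ≤ ‖x‖ * ‖q‖ ^ i - 1 := by gcongr
    _ = ‖x * q ^ i‖ - ‖(1 : K)‖ := by rw [norm_mul, norm_pow, norm_one]
    _ ≤ ‖x * q ^ i + 1‖ := norm_sub_le_norm_add _ _

theorem two_mul_norm_le_mul_norm_mul_pow_add_one (hq : 1 / 2 ≤ ‖q‖) (hx : 280 ≤ ‖x‖) {i j : ℕ}
    (hi : i ≤ 3) (hj : j ≤ 4) :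
    2 * ‖x‖ ≤ ‖x * q ^ i + 1‖ * ‖x * q ^ j + 1‖ :=
  calc 2 * ‖x‖ ≤ (‖x‖ / 2 ^ 3 - 1) * (‖x‖ / 2 ^ 4 - 1) := by nlinarith
    _ ≤ ‖x * q ^ i + 1‖ * ‖x * q ^ j + 1‖ :=
      mul_le_mul (norm_div_two_pow_sub_one_le x hq hi) (norm_div_two_pow_sub_one_le x hq hj)
        (by linarith) (norm_nonneg _)

theorem norm_sub_neg_zpow_le_factor_product (hq : 1 / 2 ≤ ‖q‖) (hx : 280 ≤ ‖x‖) {m i j : ℕ}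
    (hm : 1 / 2 ≤ ‖x * q ^ m‖) (hi : i ≤ 3) (hj : j ≤ 4) :
    ‖x - (-q ^ (-(m : ℤ)))‖ ≤ ‖x * q ^ m + 1‖ * ‖x * q ^ i + 1‖ * ‖x * q ^ j + 1‖ := by
  have hq0 : q ≠ 0 := norm_pos_iff.mp (by linarith)
  rw [sub_neg_eq_add, zpow_neg, zpow_natCast]
  calc ‖x + (q ^ m)⁻¹‖ = 2 * (‖x + (q ^ m)⁻¹‖ * (1 / 2)) := by ring
    _ ≤ 2 * (‖x + (q ^ m)⁻¹‖ * ‖x * q ^ m‖) := by gcongr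
    _ = ‖x * q ^ m + 1‖ * (2 * ‖x‖) := by
      rw [norm_add_inv_mul_norm_mul x (pow_ne_zero m hq0)]
      ring
    _ ≤ ‖x * q ^ m + 1‖ * (‖x * q ^ i + 1‖ * ‖x * q ^ j + 1‖) :=
      mul_le_mul_of_nonneg_left (two_mul_norm_le_mul_norm_mul_pow_add_one hq hx hi hj)
        (norm_nonneg _)
    _ = ‖x * q ^ m + 1‖ * ‖x * q ^ i + 1‖ * ‖x * q ^ j + 1‖ := (mul_assoc _ _ _).symm

theorem one_le_norm_mul_pow_pred_of_isLeast {κ : ℕ} (hx : 1 ≤ ‖x‖)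
    (hκ : IsLeast {m : ℕ | 1 ≤ m ∧ ‖x * q ^ m‖ < 1} κ) : 1 ≤ ‖x * q ^ (κ - 1)‖ := by
  obtain ⟨⟨one_le, -⟩, minimal⟩ := hκ
  rcases one_le.eq_or_lt with rfl | one_lt
  · simpa only [tsub_self, pow_zero, mul_one] using hx
  · by_contra! pred_lt
    have : κ ≤ κ - 1 := minimal ⟨by omega, pred_lt⟩
    omega

theorem factor_products_lower_bound_general (hq : 1 / 2 ≤ ‖q‖) (hx : 280 ≤ ‖x‖) {δ : ℝ}
    (hout : ∀ i : ℕ, 1 ≤ i → δ ≤ ‖x - (-q ^ (-(i : ℤ)))‖)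
    {κ : ℕ} (hκ : IsLeast {m : ℕ | 1 ≤ m ∧ ‖x * q ^ m‖ < 1} κ) :
    δ ≤ ‖x * q ^ κ + 1‖ * ‖x * q + 1‖ * ‖x * q ^ 2 + 1‖ ∧
      δ ≤ ‖x * q ^ (κ - 1) + 1‖ * ‖x * q ^ 3 + 1‖ * ‖x * q ^ 4 + 1‖ := by
  have norm_pred : 1 ≤ ‖x * q ^ (κ - 1)‖ := one_le_norm_mul_pow_pred_of_isLeast (by linarith) hκ
  obtain ⟨⟨one_le, norm_lt⟩, -⟩ := hκ
  have norm_ge : 1 / 2 ≤ ‖x * q ^ κ‖ := by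
    rw [← pow_sub_one_mul (by omega) q, ← mul_assoc, norm_mul]
    nlinarith
  have one_lt : 1 < κ := by
    refine one_le.lt_of_ne' ?_
    rintro rfl
    rw [pow_one, norm_mul] at norm_lt
    nlinarith
  constructor
  · simpa only [pow_one] using (hout κ one_le).trans <|
      norm_sub_neg_zpow_le_factor_product (i := 1) (j := 2) hq hx norm_ge (by norm_num)
        (by norm_num)
  · exact (hout (κ - 1) (by omega)).trans <|
      norm_sub_neg_zpow_le_factor_product hq hx (by linarith) le_rfl le_rfl

end NormedDivisionRing

theorem half_le_one_sub_one_div_sub_one {n : ℕ} (hn : 3 ≤ n) :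
    (1 / 2 : ℝ) ≤ 1 - 1 / ((n : ℝ) - 1) := by
  have hn' : (3 : ℝ) ≤ n := mod_cast hn
  have : 1 / ((n : ℝ) - 1) ≤ 1 / 2 := one_div_le_one_div_of_le two_pos (by linarith)
  linarith

theorem one_sub_rpow_sq_le_one {t s : ℝ} (ht : 1 ≤ t) (hs : s ≤ 0) : (1 - t ^ s) ^ 2 ≤ 1 := by
  have rpow_nonneg : 0 ≤ t ^ s := Real.rpow_nonneg (by linarith) s
  have rpow_le_one : t ^ s ≤ 1 := Real.rpow_le_one_of_one_le_of_nonpos ht hs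
  exact pow_le_one₀ (by linarith) (by linarith)

/-- Part (C) of the proof: for `x` with `|x| > 8^11` lying outside all open disks
`D(μ_i, 1/(2n))`, `μ_i = -q^{-i}`, the stated products of factors `|x q^m + 1|` are bounded
below by `(1 - |x|^{-1/2})² / (2n)`. -/
theorem factor_products_lower_bound (n : ℕ) (hn : 3 ≤ n) (q : ℂ)
    (hq1 : 1 - 1 / ((n : ℝ) - 1) ≤ ‖q‖) (hq2 : ‖q‖ ≤ 1 - 1 / (n : ℝ))
    (x : ℂ) (hx : (8 : ℝ) ^ 11 < ‖x‖)
    (hout : ∀ i : ℕ, 1 ≤ i → 1 / (2 * (n : ℝ)) ≤ ‖x - (-q ^ (-(i : ℤ)))‖)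
    (κ : ℕ) (hκ : IsLeast {m : ℕ | 1 ≤ m ∧ ‖x * q ^ m‖ < 1} κ) :
    (1 - ‖x‖ ^ (-(1 / 2) : ℝ)) ^ 2 / (2 * (n : ℝ))
        ≤ ‖x * q ^ κ + 1‖ * ‖x * q + 1‖ * ‖x * q ^ 2 + 1‖ ∧
      (1 - ‖x‖ ^ (-(1 / 2) : ℝ)) ^ 2 / (2 * (n : ℝ))
        ≤ ‖x * q ^ (κ - 1) + 1‖ * ‖x * q ^ 3 + 1‖ * ‖x * q ^ 4 + 1‖ := by
  have slack := div_le_div_of_nonneg_right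
    (one_sub_rpow_sq_le_one (t := ‖x‖) (s := -(1 / 2)) (by linarith) (by norm_num))
    (by positivity : 0 ≤ 2 * (n : ℝ))
  exact factor_products_lower_bound_general ((half_le_one_sub_one_div_sub_one hn).trans hq1)
    (by linarith) (fun i hi => slack.trans (hout i hi)) hκ
end

section
/- Let n ≥ 3 be an integer and let q ∈ ℂ with 1 - 1/(n-1) ≤ |q| ≤ 1 - 1/n. Suppose s ∈ ℕ, s ≥ 1, is such that the circle C(μ_s, 1/(2n)) about μ_s := -q^{-s} of radius 1/(2n) is contained in the set {x ∈ ℂ : |x| > 8^11}. Then at every point x of this circle one has |Θ*(q,x)| > 1 > 1/(8^11 - 1) ≥ |G(q,x)|, where Θ*(q,x) := Σ_{j=-∞}^{∞} q^{j(j+1)/2} x^j and G(q,x) := Σ_{j=-∞}^{-1} q^{j(j+1)/2} x^j. -/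
/-!
Put `y = q ^ s * x`. Shifting the summation index by `s` gives
`Θ*(q, x) = q ^ (s(s+1)/2) x ^ s Θ*(q, y)`, and `x ∈ C(μ_s, h)` says that `y` lies at distance
`h |q| ^ s` from `-1`, a zero of `Θ*(q, ·)`. In the Jacobi triple product for `Θ*(q, y)` only the
factor `1 + y⁻¹` is small, of size about `h |q| ^ s`; when `|q| ≤ 1 - 2h` the other factors make up
three products `(a; q)_∞` with `|a|, |q| ≤ 1 - h`, each at least `exp (-2 / h)`. Since
`|x| ≈ |q| ^ (-s)`, the shift contributes a power of `|q|⁻¹` with exponent quadratic in `s`, which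
beats these losses because `|q| ^ (-s)` is large.
-/

open Filter Topology

section QBinomial

/-- The Gaussian binomial coefficient, defined through Pascal's rule so that it makes sense for
every `q`, roots of unity included. -/
def qChoose {R : Type*} [Semiring R] (q : R) : ℕ → ℕ → R
  | _, 0 => 1
  | 0, _ + 1 => 0
  | n + 1, k + 1 => qChoose q n k + q ^ (k + 1) * qChoose q n (k + 1)

@[simp]
lemma qChoose_zero_right {R : Type*} [Semiring R] (q : R) (n : ℕ) : qChoose q n 0 = 1 := by
  cases n <;> rfl

lemma qChoose_succ_succ {R : Type*} [Semiring R] (q : R) (n k : ℕ) :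
    qChoose q (n + 1) (k + 1) = qChoose q n k + q ^ (k + 1) * qChoose q n (k + 1) :=
  rfl

lemma qChoose_eq_zero_of_lt {R : Type*} [Semiring R] (q : R) {n k : ℕ} (h : n < k) :
    qChoose q n k = 0 := by
  induction n generalizing k with
  | zero => obtain ⟨k, rfl⟩ := Nat.exists_eq_succ_of_ne_zero h.ne'; rfl
  | succ n ih =>
    obtain ⟨k, rfl⟩ := Nat.exists_eq_succ_of_ne_zero (Nat.ne_zero_of_lt h)
    rw [Nat.succ_eq_add_one, qChoose_succ_succ, ih (by lia), ih (by lia), mul_zero, add_zero]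

lemma sum_qChoose_succ_mul {R : Type*} [CommSemiring R] (q : R) (n : ℕ) (f : ℕ → R) :
    ∑ k ∈ Finset.range (n + 2), qChoose q (n + 1) k * f k =
      ∑ k ∈ Finset.range (n + 1), qChoose q n k * (f (k + 1) + q ^ k * f k) := by
  have extend : ∑ k ∈ Finset.range (n + 1), q ^ k * qChoose q n k * f k =
      ∑ k ∈ Finset.range (n + 1), q ^ (k + 1) * qChoose q n (k + 1) * f (k + 1) + f 0 := by
    have h := Finset.sum_range_succ' (fun k => q ^ k * qChoose q n k * f k) (n + 1)
    rw [Finset.sum_range_succ, qChoose_eq_zero_of_lt q n.lt_succ_self] at h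
    simpa using h
  calc ∑ k ∈ Finset.range (n + 2), qChoose q (n + 1) k * f k
      = ∑ k ∈ Finset.range (n + 1), qChoose q n k * f (k + 1) +
          (∑ k ∈ Finset.range (n + 1), q ^ (k + 1) * qChoose q n (k + 1) * f (k + 1) + f 0) := by
        rw [Finset.sum_range_succ', qChoose_zero_right, one_mul, ← add_assoc,
          ← Finset.sum_add_distrib]
        simp only [qChoose_succ_succ, add_mul]
    _ = ∑ k ∈ Finset.range (n + 1), qChoose q n k * (f (k + 1) + q ^ k * f k) := by
        rw [← extend, ← Finset.sum_add_distrib]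
        exact Finset.sum_congr rfl fun k _ => by ring

/-- The finite `q`-shifted factorial `(a; q)_n`. -/
def qPochhammer {R : Type*} [CommRing R] (a q : R) (n : ℕ) : R :=
  ∏ k ∈ Finset.range n, (1 - a * q ^ k)

variable {R : Type*} [CommRing R]

@[simp]
lemma qPochhammer_zero (a q : R) : qPochhammer a q 0 = 1 :=
  Finset.prod_range_zero _

lemma qPochhammer_succ (a q : R) (n : ℕ) :
    qPochhammer a q (n + 1) = qPochhammer a q n * (1 - a * q ^ n) :=
  Finset.prod_range_succ _ n

lemma qPochhammer_succ' (a q : R) (n : ℕ) :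
    qPochhammer a q (n + 1) = (1 - a) * qPochhammer (a * q) q n := by
  simp only [qPochhammer, Finset.prod_range_succ', pow_zero, mul_one, mul_comm (1 - a), pow_succ',
    mul_assoc]

lemma qChoose_add_mul_qPochhammer_mul_qPochhammer (q : R) (i k : ℕ) :
    qChoose q (i + k) i * (qPochhammer q q i * qPochhammer q q k) = qPochhammer q q (i + k) := by
  induction i generalizing k with
  | zero => simp
  | succ i ihi =>
    induction k with
    | zero =>
      have h := ihi 0
      rw [add_zero, qPochhammer_zero, mul_one] at h
      rw [add_zero, qChoose_succ_succ, qChoose_eq_zero_of_lt q i.lt_succ_self, mul_zero, add_zero,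
        qPochhammer_zero, mul_one, qPochhammer_succ, ← mul_assoc, h]
    | succ k ihk =>
      have hi := ihi (k + 1)
      rw [← add_assoc, qPochhammer_succ q q k] at hi
      rw [add_right_comm, qPochhammer_succ q q i] at ihk
      rw [show i + 1 + (k + 1) = i + k + 1 + 1 by ring, qChoose_succ_succ, qPochhammer_succ q q i,
        qPochhammer_succ q q k, qPochhammer_succ q q (i + k + 1)]
      linear_combination (1 - q * q ^ i) * hi + q ^ (i + 1) * (1 - q * q ^ k) * ihk

theorem qPochhammer_eq_sum_qChoose (a q : R) (n : ℕ) :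
    qPochhammer a q n =
      ∑ k ∈ Finset.range (n + 1), qChoose q n k * (q ^ k.choose 2 * (-a) ^ k) := by
  induction n generalizing a with
  | zero => simp
  | succ n ih =>
    rw [qPochhammer_succ', ih, sum_qChoose_succ_mul, Finset.mul_sum]
    refine Finset.sum_congr rfl fun k _ => ?_
    rw [Nat.choose_succ_succ' k 1, Nat.choose_one_right]
    ring

end QBinomial

section ThetaTerm

lemma two_mul_triangular (j : ℤ) : 2 * (j * (j + 1) / 2) = j * (j + 1) :=
  Int.two_mul_ediv_two_of_even (Int.even_mul_succ_self j)

lemma triangular_add (i j : ℤ) :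
    (i + j) * (i + j + 1) / 2 = i * (i + 1) / 2 + j * (j + 1) / 2 + i * j := by
  linarith [two_mul_triangular (i + j), two_mul_triangular i, two_mul_triangular j]

/-- The `j`-th term `q ^ (j(j+1)/2) x ^ j` of the theta series. -/
def thetaTerm {K : Type*} [DivisionRing K] (q x : K) (j : ℤ) : K :=
  q ^ (j * (j + 1) / 2) * x ^ j

@[simp]
lemma thetaTerm_one {K : Type*} [DivisionRing K] (q x : K) : thetaTerm q x 1 = q * x := by
  simp [thetaTerm]

variable {K : Type*} [Field K] {q x : K}

lemma thetaTerm_add (hq : q ≠ 0) (hx : x ≠ 0) (i j : ℤ) :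
    thetaTerm q x (i + j) = thetaTerm q x i * thetaTerm q (q ^ i * x) j := by
  simp only [thetaTerm, triangular_add, zpow_add₀ hq, zpow_add₀ hx, mul_zpow, zpow_mul]
  ring

lemma thetaTerm_add_one (hq : q ≠ 0) (hx : x ≠ 0) (j : ℤ) :
    thetaTerm q x (j + 1) = q ^ (j + 1) * x * thetaTerm q x j := by
  rw [thetaTerm_add hq hx, thetaTerm_one, zpow_add_one₀ hq]
  ring

lemma thetaTerm_neg (hq : q ≠ 0) (x : K) (j : ℤ) :
    thetaTerm q x (-j) = thetaTerm q (q * x)⁻¹ j := by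
  have exponent : -j * (-j + 1) / 2 = j * (j + 1) / 2 + -j := by
    linarith [two_mul_triangular (-j), two_mul_triangular j]
  simp only [thetaTerm, exponent, zpow_add₀ hq, inv_zpow', mul_zpow, mul_assoc]

lemma thetaTerm_natCast (q x : K) (k : ℕ) :
    thetaTerm q x k = q ^ k.choose 2 * (x * q) ^ k := by
  have exponent : (k : ℤ) * (k + 1) / 2 = (k.choose 2 + k : ℕ) := by
    have h := (k + 1).choose_two_right
    rw [Nat.choose_succ_succ' k 1, Nat.choose_one_right, Nat.add_sub_cancel] at h
    rw [add_comm (k.choose 2), h, mul_comm]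
    norm_cast
  rw [thetaTerm, exponent, zpow_natCast, zpow_natCast, pow_add, mul_pow]
  ring

/-- A finite form of the Jacobi triple product. Increasing `m` by one multiplies the left side by
`1 + q ^ m / x`, which on the right is Pascal's rule. -/
theorem qPochhammer_mul_qPochhammer_eq_sum (hq : q ≠ 0) (hx : x ≠ 0) (m n : ℕ) :
    qPochhammer (-x⁻¹) q m * qPochhammer (-(x * q)) q n =
      ∑ k ∈ Finset.range (m + n + 1), qChoose q (m + n) k * thetaTerm q x (k - m) := by
  induction m with
  | zero =>
    simp only [qPochhammer_zero, one_mul, zero_add, Nat.cast_zero, sub_zero, thetaTerm_natCast]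
    rw [qPochhammer_eq_sum_qChoose, neg_neg]
  | succ m ih =>
    rw [qPochhammer_succ, mul_right_comm, ih, add_right_comm m 1 n, sum_qChoose_succ_mul,
      Finset.sum_mul]
    refine Finset.sum_congr rfl fun k _ => ?_
    have shift : thetaTerm q x (k - m) * q ^ m = q ^ k * x * thetaTerm q x (k - (m + 1)) := by
      rw [show (k : ℤ) - m = k - (m + 1) + 1 by ring, thetaTerm_add_one hq hx, sub_add,
        add_sub_cancel_right, zpow_sub₀ hq, zpow_natCast, zpow_natCast]
      field_simp
    rw [mul_assoc]
    congr 1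
    push_cast
    rw [add_sub_add_right_eq_sub]
    field_simp
    linear_combination shift

theorem qPochhammer_mul_qPochhammer_eq_sum_Icc (hq : q ≠ 0) (hx : x ≠ 0) (N : ℕ) :
    qPochhammer (-x⁻¹) q N * qPochhammer (-(x * q)) q N =
      ∑ j ∈ Finset.Icc (-N : ℤ) N, qChoose q (N + N) (N + j).toNat * thetaTerm q x j := by
  rw [qPochhammer_mul_qPochhammer_eq_sum hq hx]
  refine Finset.sum_nbij' (fun k => (k : ℤ) - N) (fun j => (N + j).toNat) ?_ ?_ ?_ ?_ ?_ <;>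
    simp <;> lia

end ThetaTerm

section JacobiTripleProduct

variable {𝕜 : Type*} [NormedField 𝕜] {a q x : 𝕜}

/-- The infinite `q`-shifted factorial `(a; q)_∞`. -/
noncomputable def qPochhammerInf (a q : 𝕜) : 𝕜 :=
  ∏' k : ℕ, (1 - a * q ^ k)

/-- The two-sided theta series, written `Θ*(q, x)` in the paper. -/
noncomputable def thetaStar (q x : 𝕜) : 𝕜 :=
  ∑' j : ℤ, thetaTerm q x j

lemma norm_thetaTerm (q x : 𝕜) (j : ℤ) : ‖thetaTerm q x j‖ = thetaTerm ‖q‖ ‖x‖ j := by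
  simp only [thetaTerm, norm_mul, norm_zpow]

lemma thetaStar_eq_thetaTerm_mul (hq : q ≠ 0) (hx : x ≠ 0) (i : ℤ) :
    thetaStar q x = thetaTerm q x i * thetaStar q (q ^ i * x) := by
  simp only [thetaStar, ← tsum_mul_left, ← thetaTerm_add hq hx]
  exact ((Equiv.addLeft i).tsum_eq (thetaTerm q x)).symm

lemma summable_thetaTerm_natCast {r y : ℝ} (hr0 : 0 < r) (hr : r < 1) (hy : 0 < y) :
    Summable fun k : ℕ => thetaTerm r y k := by
  have pos (k : ℕ) : 0 < thetaTerm r y k := by unfold thetaTerm; positivity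
  refine summable_of_ratio_test_tendsto_lt_one zero_lt_one (.of_forall fun k => (pos k).ne') ?_
  have ratio (k : ℕ) : ‖thetaTerm r y (k + 1 : ℕ)‖ / ‖thetaTerm r y k‖ = r ^ (k + 1) * y := by
    rw [Real.norm_of_nonneg (pos _).le, Real.norm_of_nonneg (pos _).le, Nat.cast_succ,
      thetaTerm_add_one hr0.ne' hy.ne', mul_div_cancel_right₀ _ (pos k).ne']
    norm_cast
  simp only [ratio]
  simpa using ((tendsto_pow_atTop_nhds_zero_of_lt_one hr0.le hr).comp
    (tendsto_add_atTop_nat 1)).mul_const y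

lemma summable_norm_thetaTerm (hq0 : q ≠ 0) (hq : ‖q‖ < 1) (hx : x ≠ 0) :
    Summable fun j : ℤ => ‖thetaTerm q x j‖ := by
  have hq0' : 0 < ‖q‖ := norm_pos_iff.mpr hq0
  have hx' : 0 < ‖x‖ := norm_pos_iff.mpr hx
  simp only [norm_thetaTerm]
  refine .of_nat_of_neg (summable_thetaTerm_natCast hq0' hq hx') ?_
  simp only [thetaTerm_neg hq0'.ne']
  exact summable_thetaTerm_natCast hq0' hq (by positivity)

lemma succ_mul_one_sub_mul_pow_le {ρ : ℝ} (hρ0 : 0 ≤ ρ) (hρ : ρ ≤ 1) (k : ℕ) :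
    (k + 1) * (1 - ρ) * ρ ^ (k + 1) ≤ 1 - ρ ^ (k + 1) := by
  have geom : (k + 1) * ρ ^ (k + 1) ≤ ∑ i ∈ Finset.range (k + 1), ρ ^ i := by
    simpa using Finset.card_nsmul_le_sum (Finset.range (k + 1)) (ρ ^ ·) (ρ ^ (k + 1))
      fun i hi => pow_le_pow_of_le_one hρ0 hρ (Finset.mem_range.mp hi).le
  rw [← mul_neg_geom_sum, mul_comm _ (1 - ρ), mul_assoc]
  exact mul_le_mul_of_nonneg_left geom (sub_nonneg.mpr hρ)

lemma sum_pow_succ_pow_succ_le {ρ : ℝ} (hρ0 : 0 ≤ ρ) (hρ : ρ < 1) (N k : ℕ) :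
    ∑ m ∈ Finset.range N, (ρ ^ (m + 1)) ^ (k + 1) ≤ 1 / ((k + 1) * (1 - ρ)) := by
  have hpow : ρ ^ (k + 1) < 1 := pow_lt_one₀ hρ0 hρ k.succ_ne_zero
  have : 0 < 1 - ρ := sub_pos.mpr hρ
  calc ∑ m ∈ Finset.range N, (ρ ^ (m + 1)) ^ (k + 1)
      = ρ ^ (k + 1) * ∑ m ∈ Finset.range N, (ρ ^ (k + 1)) ^ m := by
        rw [Finset.mul_sum]
        exact Finset.sum_congr rfl fun m _ => by ring
    _ ≤ ρ ^ (k + 1) * (1 - ρ ^ (k + 1))⁻¹ := by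
        gcongr
        rw [← tsum_geometric_of_lt_one (by positivity) hpow]
        exact (summable_geometric_of_lt_one (by positivity) hpow).sum_le_tsum _
          fun m _ => by positivity
    _ ≤ 1 / ((k + 1) * (1 - ρ)) := by
        rw [← div_eq_mul_inv, div_le_div_iff₀ (sub_pos.mpr hpow) (by positivity), mul_comm, one_mul]
        exact succ_mul_one_sub_mul_pow_le hρ0 hρ.le k

/-- Expanding each logarithm and summing over `m` first leaves a series dominated by `ζ(2)`. -/
lemma exp_le_prod_one_sub_pow_succ {ρ : ℝ} (hρ0 : 0 ≤ ρ) (hρ : ρ < 1) (N : ℕ) :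
    Real.exp (-(2 / (1 - ρ))) ≤ ∏ m ∈ Finset.range N, (1 - ρ ^ (m + 1)) := by
  have hpow (m : ℕ) : ρ ^ (m + 1) < 1 := pow_lt_one₀ hρ0 hρ m.succ_ne_zero
  have hfactor (m : ℕ) : 0 < 1 - ρ ^ (m + 1) := sub_pos.mpr (hpow m)
  have : 0 < 1 - ρ := sub_pos.mpr hρ
  have hlog := hasSum_sum (s := Finset.range N) fun m _ =>
    Real.hasSum_pow_div_log_of_abs_lt_one ((abs_of_nonneg (pow_nonneg hρ0 _)).trans_lt (hpow m))
  have hzeta : HasSum (fun k : ℕ => 1 / (1 - ρ) * (1 / ((k : ℝ) + 1) ^ 2))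
      (1 / (1 - ρ) * (Real.pi ^ 2 / 6)) := by
    refine .mul_left _ ?_
    simpa using (hasSum_nat_add_iff' 1).mpr hasSum_zeta_two
  have hpi : Real.pi ^ 2 / 6 ≤ 2 := by nlinarith [Real.pi_lt_d2, Real.pi_pos]
  have hle := hasSum_le (fun k => ?_) hlog hzeta
  · rw [← Real.le_log_iff_exp_le (Finset.prod_pos fun m _ => hfactor m),
      Real.log_prod fun m _ => (hfactor m).ne', neg_le, ← Finset.sum_neg_distrib]
    calc _ ≤ 1 / (1 - ρ) * (Real.pi ^ 2 / 6) := hle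
      _ ≤ 1 / (1 - ρ) * 2 := by gcongr
      _ = 2 / (1 - ρ) := one_div_mul_eq_div _ _
  · rw [← Finset.sum_div]
    calc _ ≤ 1 / ((k + 1) * (1 - ρ)) / (k + 1) := by
          gcongr
          exact sum_pow_succ_pow_succ_le hρ0 hρ N k
      _ = 1 / (1 - ρ) * (1 / ((k : ℝ) + 1) ^ 2) := by field_simp

lemma exp_le_norm_qPochhammer {ρ : ℝ} (ha : ‖a‖ ≤ ρ) (hq : ‖q‖ ≤ ρ) (hρ : ρ < 1) (N : ℕ) :
    Real.exp (-(2 / (1 - ρ))) ≤ ‖qPochhammer a q N‖ := by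
  have hρ0 : 0 ≤ ρ := (norm_nonneg a).trans ha
  refine (exp_le_prod_one_sub_pow_succ hρ0 hρ N).trans ?_
  rw [qPochhammer, norm_prod]
  refine Finset.prod_le_prod (fun m _ => sub_nonneg.mpr (pow_le_one₀ hρ0 hρ.le)) fun m _ => ?_
  calc 1 - ρ ^ (m + 1) ≤ 1 - ‖a * q ^ m‖ := by
        rw [norm_mul, norm_pow, pow_succ']
        gcongr
    _ ≤ ‖1 - a * q ^ m‖ := by simpa using norm_sub_norm_le (1 : 𝕜) (a * q ^ m)

lemma qPochhammer_self_ne_zero (hq : ‖q‖ < 1) (N : ℕ) : qPochhammer q q N ≠ 0 :=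
  norm_pos_iff.mp ((Real.exp_pos _).trans_le (exp_le_norm_qPochhammer le_rfl le_rfl hq N))

lemma qChoose_add_eq_div (hq : ‖q‖ < 1) (i k : ℕ) :
    qChoose q (i + k) i = qPochhammer q q (i + k) / (qPochhammer q q i * qPochhammer q q k) := by
  rw [eq_div_iff (mul_ne_zero (qPochhammer_self_ne_zero hq i) (qPochhammer_self_ne_zero hq k)),
    qChoose_add_mul_qPochhammer_mul_qPochhammer]

variable [CompleteSpace 𝕜]

lemma multipliable_qPochhammer (a : 𝕜) (hq : ‖q‖ < 1) :
    Multipliable fun k : ℕ => 1 - a * q ^ k := by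
  simp only [sub_eq_add_neg]
  refine multipliable_one_add_of_summable ?_
  simp only [norm_neg, norm_mul, norm_pow]
  exact (summable_geometric_of_lt_one (norm_nonneg q) hq).mul_left _

lemma tendsto_qPochhammer (a : 𝕜) (hq : ‖q‖ < 1) :
    Tendsto (qPochhammer a q) atTop (𝓝 (qPochhammerInf a q)) :=
  (multipliable_qPochhammer a hq).tendsto_prod_tprod_nat

lemma qPochhammerInf_eq_one_sub_mul (a : 𝕜) (hq : ‖q‖ < 1) :
    qPochhammerInf a q = (1 - a) * qPochhammerInf (a * q) q := by
  refine tendsto_nhds_unique ((tendsto_qPochhammer a hq).comp (tendsto_add_atTop_nat 1)) ?_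
  simp only [Function.comp_def, qPochhammer_succ']
  exact (tendsto_qPochhammer (a * q) hq).const_mul _

lemma exp_le_norm_qPochhammerInf {ρ : ℝ} (ha : ‖a‖ ≤ ρ) (hq : ‖q‖ ≤ ρ) (hρ : ρ < 1) :
    Real.exp (-(2 / (1 - ρ))) ≤ ‖qPochhammerInf a q‖ :=
  ge_of_tendsto' (tendsto_qPochhammer a (hq.trans_lt hρ)).norm
    (exp_le_norm_qPochhammer ha hq hρ)

lemma qPochhammerInf_self_ne_zero (hq : ‖q‖ < 1) : qPochhammerInf q q ≠ 0 :=
  norm_pos_iff.mp ((Real.exp_pos _).trans_le (exp_le_norm_qPochhammerInf le_rfl le_rfl hq))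

lemma tendsto_qChoose_add {ι : Type*} {l : Filter ι} {u v : ι → ℕ} (hq : ‖q‖ < 1)
    (hu : Tendsto u l atTop) (hv : Tendsto v l atTop) :
    Tendsto (fun t => qChoose q (u t + v t) (u t)) l (𝓝 (qPochhammerInf q q)⁻¹) := by
  have hP := tendsto_qPochhammer q hq
  have hP0 := qPochhammerInf_self_ne_zero hq
  simp only [qChoose_add_eq_div hq]
  have h := (hP.comp (hu.atTop_add_atTop hv)).div ((hP.comp hu).mul (hP.comp hv))
    (mul_ne_zero hP0 hP0)
  rwa [div_mul_cancel_left₀ hP0] at h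

lemma exists_norm_qChoose_le (hq : ‖q‖ < 1) : ∃ C, ∀ n k, ‖qChoose q n k‖ ≤ C := by
  obtain ⟨M, hM⟩ := (tendsto_qPochhammer q hq).norm.bddAbove_range
  have hM (N : ℕ) : ‖qPochhammer q q N‖ ≤ M := hM ⟨N, rfl⟩
  have hM0 : 0 ≤ M := (norm_nonneg _).trans (hM 0)
  set c := Real.exp (-(2 / (1 - ‖q‖)))
  have hc (N : ℕ) : c ≤ ‖qPochhammer q q N‖ := exp_le_norm_qPochhammer le_rfl le_rfl hq N
  have : 0 < c := Real.exp_pos _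
  refine ⟨M / (c * c), fun n k => ?_⟩
  rcases lt_or_ge n k with h | h
  · rw [qChoose_eq_zero_of_lt q h, norm_zero]
    positivity
  · obtain ⟨i, rfl⟩ := Nat.exists_eq_add_of_le h
    rw [qChoose_add_eq_div hq, norm_div, norm_mul]
    gcongr
    exacts [hM _, hc _, hc _]

theorem tendsto_sum_qChoose_mul_thetaTerm (hq0 : q ≠ 0) (hq : ‖q‖ < 1) (hx : x ≠ 0) :
    Tendsto (fun N : ℕ =>
        ∑ j ∈ Finset.Icc (-N : ℤ) N, qChoose q (N + N) (N + j).toNat * thetaTerm q x j)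
      atTop (𝓝 ((qPochhammerInf q q)⁻¹ * thetaStar q x)) := by
  obtain ⟨C, hC⟩ := exists_norm_qChoose_le hq
  have : 0 ≤ C := (norm_nonneg _).trans (hC 0 0)
  rw [thetaStar, ← tsum_mul_left]
  refine (tendsto_tsum_of_dominated_convergence ((summable_norm_thetaTerm hq0 hq hx).mul_left C)
    (fun j => ?_) (.of_forall fun N j => ?_)).congr fun N => (sum_eq_tsum_indicator _ _).symm
  · have hu : Tendsto (fun N : ℕ => (N + j).toNat) atTop atTop :=
      tendsto_atTop.mpr fun b => eventually_atTop.mpr ⟨b + j.natAbs, fun N hN => by lia⟩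
    have hv : Tendsto (fun N : ℕ => (N - j).toNat) atTop atTop :=
      tendsto_atTop.mpr fun b => eventually_atTop.mpr ⟨b + j.natAbs, fun N hN => by lia⟩
    refine ((tendsto_qChoose_add hq hu hv).mul_const _).congr' ?_
    filter_upwards [eventually_ge_atTop j.natAbs] with N hN
    have hj : j ∈ (Finset.Icc (-N : ℤ) N : Set ℤ) := by
      rw [Finset.coe_Icc, Set.mem_Icc]
      lia
    rw [Set.indicator_of_mem hj, show N + N = (N + j).toNat + (N - j).toNat by lia]
  · refine (norm_indicator_le_norm_self _ j).trans ?_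
    rw [norm_mul]
    exact mul_le_mul_of_nonneg_right (hC _ _) (norm_nonneg _)

theorem thetaStar_eq_jacobi_triple_product (hq0 : q ≠ 0) (hq : ‖q‖ < 1) (hx : x ≠ 0) :
    thetaStar q x =
      qPochhammerInf q q * qPochhammerInf (-x⁻¹) q * qPochhammerInf (-(x * q)) q := by
  have hprod := (tendsto_qPochhammer (-x⁻¹) hq).mul (tendsto_qPochhammer (-(x * q)) hq)
  simp only [qPochhammer_mul_qPochhammer_eq_sum_Icc hq0 hx] at hprod
  rw [mul_assoc, tendsto_nhds_unique hprod (tendsto_sum_qChoose_mul_thetaTerm hq0 hq hx),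
    mul_inv_cancel_left₀ (qPochhammerInf_self_ne_zero hq)]

end JacobiTripleProduct

section LowerBound

lemma abs_norm_sub_one_le_norm_add_one {E : Type*} [SeminormedRing E] [NormOneClass E] (y : E) :
    |‖y‖ - 1| ≤ ‖y + 1‖ := by
  simpa using abs_norm_sub_norm_le y (-1)

variable {𝕜 : Type*} [NormedField 𝕜] {q x : 𝕜}

lemma zpow_le_norm_thetaTerm (hq : q ≠ 0) {s : ℕ} (h : ‖q‖ ≤ ‖q ^ s * x‖) :
    ‖q‖ ^ ((s * (s + 1) / 2 : ℤ) + (1 - s) * s) ≤ ‖thetaTerm q x s‖ := by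
  have hqpos : 0 < ‖q‖ := norm_pos_iff.mpr hq
  have hx : ‖q‖ ^ (1 - s : ℤ) ≤ ‖x‖ := by
    rwa [zpow_sub₀ hqpos.ne', zpow_one, zpow_natCast, div_le_iff₀' (by positivity), ← norm_pow,
      ← norm_mul]
  rw [norm_thetaTerm, thetaTerm, zpow_add₀ hqpos.ne', zpow_mul, zpow_natCast, zpow_natCast]
  gcongr

variable [CompleteSpace 𝕜]

theorem le_norm_thetaStar_of_norm_add_one_le {h : ℝ} {y : 𝕜} (hh : 0 < h) (hq0 : q ≠ 0)
    (hq : ‖q‖ ≤ 1 - 2 * h) (hy : ‖y + 1‖ ≤ h) :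
    ‖y + 1‖ * ‖y‖⁻¹ * Real.exp (-(2 / h)) ^ 3 ≤ ‖thetaStar q y‖ := by
  have hqpos : 0 < ‖q‖ := norm_pos_iff.mpr hq0
  obtain ⟨hylow, hyup⟩ := abs_le.mp ((abs_norm_sub_one_le_norm_add_one y).trans hy)
  have hy0 : y ≠ 0 := norm_pos_iff.mp (by linarith)
  have hq1 : ‖q‖ < 1 := by linarith
  have factor {a : 𝕜} (ha : ‖a‖ ≤ 1 - h) : Real.exp (-(2 / h)) ≤ ‖qPochhammerInf a q‖ := by
    simpa using exp_le_norm_qPochhammerInf ha (by linarith) (by linarith)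
  have hinv : ‖-y⁻¹ * q‖ ≤ 1 - h := by
    rw [norm_mul, norm_neg, norm_inv, inv_mul_le_iff₀ (by linarith)]
    nlinarith
  have hmul : ‖-(y * q)‖ ≤ 1 - h := by
    rw [norm_neg, norm_mul]
    nlinarith
  have hone : ‖1 - -y⁻¹‖ = ‖y + 1‖ * ‖y‖⁻¹ := by
    rw [← norm_inv, ← norm_mul, add_mul, mul_inv_cancel₀ hy0, one_mul, sub_neg_eq_add]
  rw [thetaStar_eq_jacobi_triple_product hq0 hq1 hy0, qPochhammerInf_eq_one_sub_mul (-y⁻¹) hq1]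
  simp only [norm_mul, hone]
  calc _ = Real.exp (-(2 / h)) * (‖y + 1‖ * ‖y‖⁻¹ * Real.exp (-(2 / h))) * Real.exp (-(2 / h)) := by
        ring
    _ ≤ _ := by
        gcongr
        exacts [factor (by linarith), factor hinv, factor hmul]

/-- The exponent collects `s(s+1)/2 + s(1-s)` from `thetaTerm q x s` with `|x| ≥ |q| ^ (1 - s)`,
then `s` from `|y + 1| = h |q| ^ s` and `1` from `|y|⁻¹ ≥ |q|`, where `y = q ^ s * x`. -/
theorem le_norm_thetaStar_of_norm_add_inv_eq {h : ℝ} (hh : 0 < h) (hq0 : q ≠ 0)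
    (hq : ‖q‖ ≤ 1 - 2 * h) {s : ℕ} (hx : ‖x + (q ^ s)⁻¹‖ = h) :
    h * ‖q‖ ^ ((s * (s + 1) / 2 : ℤ) + (1 - s) * s + s + 1) * Real.exp (-(2 / h)) ^ 3 ≤
      ‖thetaStar q x‖ := by
  have hqpos : 0 < ‖q‖ := norm_pos_iff.mpr hq0
  have hqs : q ^ s ≠ 0 := pow_ne_zero s hq0
  have hy : ‖q ^ s * x + 1‖ = h * ‖q‖ ^ s := by
    rw [← hx, mul_comm, ← norm_pow, ← norm_mul, add_mul, inv_mul_cancel₀ hqs, mul_comm x]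
  have hyh : ‖q ^ s * x + 1‖ ≤ h := by
    rw [hy]
    exact mul_le_of_le_one_right hh.le (pow_le_one₀ hqpos.le (by linarith))
  obtain ⟨hylow, hyup⟩ := abs_le.mp ((abs_norm_sub_one_le_norm_add_one _).trans hyh)
  have hy0 : q ^ s * x ≠ 0 := norm_pos_iff.mp (by linarith)
  have hx0 : x ≠ 0 := right_ne_zero_of_mul hy0
  have hyinv : ‖q‖ ≤ ‖q ^ s * x‖⁻¹ := by
    rw [← one_div, le_div_iff₀ (norm_pos_iff.mpr hy0)]
    nlinarith
  rw [thetaStar_eq_thetaTerm_mul hq0 hx0 s, norm_mul, zpow_natCast]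
  calc h * ‖q‖ ^ ((s * (s + 1) / 2 : ℤ) + (1 - s) * s + s + 1) * Real.exp (-(2 / h)) ^ 3
      = ‖q‖ ^ ((s * (s + 1) / 2 : ℤ) + (1 - s) * s) *
          (h * ‖q‖ ^ s * ‖q‖ * Real.exp (-(2 / h)) ^ 3) := by
        rw [zpow_add_one₀ hqpos.ne', zpow_add₀ hqpos.ne' _ (s : ℤ), zpow_natCast]
        ring
    _ ≤ ‖thetaTerm q x s‖ *
          (‖q ^ s * x + 1‖ * ‖q ^ s * x‖⁻¹ * Real.exp (-(2 / h)) ^ 3) := by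
        rw [hy]
        gcongr
        exact zpow_le_norm_thetaTerm hq0 (by linarith)
    _ ≤ _ := by
        gcongr
        exact le_norm_thetaStar_of_norm_add_one_le hh hq0 hq hyh

lemma neg_log_mul_sub_two_le_one {a r : ℝ} (hr : 2 < r) (ha : 1 - 1 / (r - 1) ≤ a) :
    -Real.log a * (r - 2) ≤ 1 := by
  have hbase : (r - 2) / (r - 1) ≤ a := by
    convert ha using 1
    have : r - 1 ≠ 0 := by linarith
    field_simp
    ring
  have hpos : 0 < (r - 2) / (r - 1) := div_pos (by linarith) (by linarith)
  have hinv : a⁻¹ ≤ (r - 1) / (r - 2) := by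
    rw [← inv_div]
    exact inv_anti₀ hpos hbase
  have hlog : -Real.log a ≤ a⁻¹ - 1 := by
    rw [← Real.log_inv]
    exact Real.log_le_sub_one_of_pos (inv_pos.mpr (hpos.trans_le hbase))
  calc -Real.log a * (r - 2) ≤ ((r - 1) / (r - 2) - 1) * (r - 2) := by
        gcongr
        linarith
    _ = 1 := by
        have : r - 2 ≠ 0 := by linarith
        field_simp
        ring

lemma one_lt_of_exp_le_inv_pow {a r : ℝ} (hr : 3 ≤ r) (ha0 : 0 < a) (ha : 1 - 1 / (r - 1) ≤ a)
    {s : ℕ} (hs : Real.exp 13 ≤ (a ^ s)⁻¹) :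
    1 < 1 / (2 * r) * a ^ ((s * (s + 1) / 2 : ℤ) + (1 - s) * s + s + 1) *
      Real.exp (-(2 / (1 / (2 * r)))) ^ 3 := by
  set l := -Real.log a with hl
  have hlr : l * (r - 2) ≤ 1 := neg_log_mul_sub_two_le_one (by linarith) ha
  have hls : 13 ≤ l * s := by
    rwa [← Real.le_log_iff_exp_le (by positivity), Real.log_inv, Real.log_pow, ← mul_neg,
      mul_comm] at hs
  have hsr : 13 * (r - 2) ≤ s := by
    nlinarith [mul_le_mul_of_nonneg_left hlr s.cast_nonneg (α := ℝ)]
  have hl1 : l ≤ 1 := by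
    by_contra! h
    nlinarith
  have hquad : 13 * (s - 5) ≤ l * s * (s - 5) :=
    mul_le_mul_of_nonneg_right hls (by linarith)
  have exponent : (((s * (s + 1) / 2 : ℤ) + (1 - s) * s + s + 1 : ℤ) : ℝ) =
      -(s * (s - 5) - 2) / 2 := by
    have := congrArg (Int.cast (R := ℝ)) (two_mul_triangular s)
    push_cast at this ⊢
    linarith
  have hlinear : Real.exp (-(2 * r)) ≤ 1 / (2 * r) := by
    rw [Real.exp_neg, ← one_div]
    gcongr
    linarith [Real.add_one_le_exp (2 * r)]
  calc 1 < Real.exp (-(2 * r) + l * (s * (s - 5) - 2) / 2 - 12 * r) := by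
        rw [Real.one_lt_exp_iff]
        linarith
    _ = Real.exp (-(2 * r)) * a ^ ((s * (s + 1) / 2 : ℤ) + (1 - s) * s + s + 1) *
          Real.exp (-(2 / (1 / (2 * r)))) ^ 3 := by
        rw [← Real.rpow_intCast, Real.rpow_def_of_pos ha0, exponent, ← Real.exp_nat_mul,
          ← Real.exp_add, ← Real.exp_add, hl]
        congr 1
        field_simp
        push_cast
        ring
    _ ≤ _ := by gcongr

end LowerBound

section NegativePart

/-- The terms of negative index of the theta series, written `G(q, x)` in the paper and summed
over `ν = -j - 1 ≥ 0`. -/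
noncomputable def thetaNegPart {𝕜 : Type*} [NormedField 𝕜] (q x : 𝕜) : 𝕜 :=
  ∑' ν : ℕ, q ^ (ν * (ν + 1) / 2) * x ^ (-(ν + 1 : ℤ))

lemma norm_thetaNegPart_le {𝕜 : Type*} [NormedField 𝕜] {q x : 𝕜} (hq : ‖q‖ ≤ 1) (hx : 1 < ‖x‖) :
    ‖thetaNegPart q x‖ ≤ 1 / (‖x‖ - 1) := by
  have hgeom := (hasSum_geometric_of_lt_one (r := ‖x‖⁻¹) (by positivity)
    (inv_lt_one_of_one_lt₀ hx)).mul_left ‖x‖⁻¹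
  have hsum : ‖x‖⁻¹ * (1 - ‖x‖⁻¹)⁻¹ = 1 / (‖x‖ - 1) := by
    rw [← mul_inv, mul_sub, mul_inv_cancel₀ (by linarith), mul_one, one_div]
  rw [← hsum]
  refine tsum_of_norm_bounded hgeom fun ν => ?_
  calc ‖q ^ (ν * (ν + 1) / 2) * x ^ (-(ν + 1 : ℤ))‖ ≤ 1 * ‖x‖⁻¹ ^ (ν + 1) := by
        rw [norm_mul, norm_pow, norm_zpow, ← inv_zpow', ← Nat.cast_succ, zpow_natCast]
        gcongr
        exact pow_le_one₀ (norm_nonneg q) hq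
    _ = ‖x‖⁻¹ * ‖x‖⁻¹ ^ ν := by rw [one_mul, pow_succ']

end NegativePart

theorem thetaStar_gt_G_on_circle_general {𝕜 : Type*} [NormedField 𝕜] [CompleteSpace 𝕜] {r R : ℝ}
    (hr : 3 ≤ r) (hR : Real.exp 13 + 1 ≤ R) {q : 𝕜} (hq1 : 1 - 1 / (r - 1) ≤ ‖q‖)
    (hq2 : ‖q‖ ≤ 1 - 1 / r) {s : ℕ} {x : 𝕜} (hx : x ∈ Metric.sphere (-q ^ (-(s : ℤ))) (1 / (2 * r)))
    (hxR : R < ‖x‖) :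
    1 < ‖thetaStar q x‖ ∧ 1 / (R - 1) < 1 ∧ ‖thetaNegPart q x‖ ≤ 1 / (R - 1) := by
  have hexp : 2 < Real.exp 13 := by linarith [Real.add_one_lt_exp (x := 13) (by norm_num)]
  have hrinv : 1 / (r - 1) ≤ 1 / 2 := one_div_le_one_div_of_le two_pos (by linarith)
  have hqpos : 0 < ‖q‖ := by linarith
  have hq0 : q ≠ 0 := norm_pos_iff.mp hqpos
  have hh : 0 < 1 / (2 * r) := by positivity
  have hhalf : 2 * (1 / (2 * r)) = 1 / r := by field_simp
  have hx' : ‖x + (q ^ s)⁻¹‖ = 1 / (2 * r) := by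
    rwa [mem_sphere_iff_norm, sub_neg_eq_add, zpow_neg, zpow_natCast] at hx
  have hqs : Real.exp 13 ≤ (‖q‖ ^ s)⁻¹ := by
    have := norm_sub_le (x + (q ^ s)⁻¹) (q ^ s)⁻¹
    rw [add_sub_cancel_right, hx', norm_inv, norm_pow] at this
    linarith
  refine ⟨?_, (div_lt_one (by linarith)).mpr (by linarith), ?_⟩
  · exact (one_lt_of_exp_le_inv_pow hr hqpos hq1 hqs).trans_le
      (le_norm_thetaStar_of_norm_add_inv_eq hh hq0 (by linarith) hx')
  · exact (norm_thetaNegPart_le (by linarith) (by linarith)).trans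
      (one_div_le_one_div_of_le (by linarith) (by linarith))

lemma exp_thirteen_add_one_le : Real.exp 13 + 1 ≤ 8 ^ 11 := by
  have : Real.exp 13 ≤ 3 ^ 13 := by
    rw [show (13 : ℝ) = (13 : ℕ) * 1 by norm_num, Real.exp_nat_mul]
    gcongr
    linarith [Real.exp_one_lt_d9]
  linarith

/-- Proposition 4: if the circle `C(μ_s, 1/(2n))` lies in `{|x| > 8^11}` then at every
point of it `|Θ*| > 1 > 1/(8^11 - 1) ≥ |G|`. -/
theorem thetaStar_gt_G_on_circle (n : ℕ) (hn : 3 ≤ n) (q : ℂ)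
    (hq1 : 1 - 1 / ((n : ℝ) - 1) ≤ ‖q‖) (hq2 : ‖q‖ ≤ 1 - 1 / (n : ℝ))
    (s : ℕ) (hs : 1 ≤ s)
    (hsub : Metric.sphere (-q ^ (-(s : ℤ)) : ℂ) (1 / (2 * (n : ℝ)))
      ⊆ {x : ℂ | (8 : ℝ) ^ 11 < ‖x‖}) :
    ∀ x ∈ Metric.sphere (-q ^ (-(s : ℤ)) : ℂ) (1 / (2 * (n : ℝ))),
      1 < ‖∑' j : ℤ, q ^ (j * (j + 1) / 2) * x ^ j‖ ∧
      (1 : ℝ) / ((8 : ℝ) ^ 11 - 1) < 1 ∧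
      ‖∑' ν : ℕ, q ^ (ν * (ν + 1) / 2) * x ^ (-(ν + 1 : ℤ))‖
        ≤ (1 : ℝ) / ((8 : ℝ) ^ 11 - 1) :=
  fun _ hx => thetaStar_gt_G_on_circle_general (mod_cast hn) exp_thirteen_add_one_le hq1 hq2 hx
    (hsub hx)
end
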